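/- arXiv:1511.02567 — 8 statements merged into one kernel-verified Lean document; each statement's English description precedes it below -/
import Mathlib

section
/- Let k ≥ l ≥ m ≥ 1 be integers with l ≥ 2, and set h₀ = (k+l+m)/(2(k+l+m−2)). If (k+l)/(4(k+l+m−2)) < x̂(h₀), then the point (a₁,a₂,a₃) = (k/(2(k+l+m−2)), l/(2(k+l+m−2)), m/(2(k+l+m−2))) lies in O₁. -/
/-!
Write `t = 2 s₁ - 1` for a point with coordinate sum `s₁`. On the plane `t = 0` inside the cube one
has `Q = -4096 s₃² (s₂ - 2 s₃)² < 0`. For `t ≥ 0` the condition `(a₁ + a₂) / 2 < x̂(s₁)`, where `a₃`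
is the smallest coordinate, says exactly `a₃ > f(t)`, where `f(t) = (√(t² + 4t) - t) / 4` is the
nonnegative root of `4y² + 2ty = t`. For `t = 2 / (k + l + m - 2)` and `l ≥ 2` this forces `m ≥ 3`,
so `t < 1/2`, and the point lies in the region (`region`) given by `0 ≤ t < 1/2`, `aᵢ > 0` and
`4aᵢ² + 2taᵢ > t` for `i = 1, 2, 3`. Two facts finish the proof.

* The region is star-shaped about `(1/6, 1/6, 1/6)` (`region_segment`), so it is enough that it lies
  in the cube (`region_subset_cube`) and avoids `Ω`.
* `Q < 0` on the region (`Qpoly_neg`). The cross-section of the region at height `t` is an open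
  triangle with inradius tending to `0` as `t → 1/2`, and `Q` vanishes at the midpoints of its sides
  (the cusps of `Ω`). In barycentric coordinates `β` of that triangle, with
  `e₂ = β₁β₂ + β₁β₃ + β₂β₃` and `e = β₁β₂β₃`, and with `t = 2x² / M`, `M = (1 + 2x)(2 + 2x)`, the
  polynomial `-M¹² Q` is a quartic form with nonnegative coefficients in the three quantities
  `w = 1 - 4e₂ + 9e`, which is nonnegative by Schur's inequality, `r = 4(e₂ - 9e)`, which is
  nonnegative by the arithmetic-geometric mean inequality, and `e` (`certificate`,
  `Qhom_eq_neg_certificate`). The coefficients are polynomials in `x ≥ 0`, themselves with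
  nonnegative coefficients.
-/

noncomputable section

/-- The symmetric polynomial `Q` in the elementary symmetric functions of `a₁, a₂, a₃`. -/
def Qpoly (a₁ a₂ a₃ : ℝ) : ℝ :=
  let s₁ := a₁ + a₂ + a₃
  let s₂ := a₁ * a₂ + a₁ * a₃ + a₂ * a₃
  let s₃ := a₁ * a₂ * a₃
  (2 * s₁ + 4 * s₃ - 1) * (64 * s₁ ^ 5 - 64 * s₁ ^ 4 + 8 * s₁ ^ 3 + 12 * s₁ ^ 2 - 6 * s₁ + 1
      + 240 * s₃ * s₁ ^ 2 - 240 * s₃ * s₁ - 1536 * s₃ ^ 2 * s₁ - 4096 * s₃ ^ 3 + 60 * s₃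
      + 768 * s₃ ^ 2)
    - 8 * s₁ * (2 * s₁ + 4 * s₃ - 1) * (2 * s₁ - 32 * s₃ - 1) * (10 * s₁ + 32 * s₃ - 5) * s₂
    - 16 * s₁ ^ 2 * (13 - 52 * s₁ + 640 * s₃ * s₁ + 1024 * s₃ ^ 2 - 320 * s₃ + 52 * s₁ ^ 2)
      * s₂ ^ 2
    + 64 * (2 * s₁ - 1) * (2 * s₁ - 32 * s₃ - 1) * s₂ ^ 3
    + 2048 * s₁ * (2 * s₁ - 1) * s₂ ^ 4

/-- The surface `Ω = {Q = 0}` in `ℝ³`. -/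
def OmegaSet : Set (ℝ × ℝ × ℝ) := {p | Qpoly p.1 p.2.1 p.2.2 = 0}

/-- The open cube `(0, 1/2)³`. -/
def cube : Set (ℝ × ℝ × ℝ) :=
  {p | p.1 ∈ Set.Ioo (0 : ℝ) (1 / 2) ∧ p.2.1 ∈ Set.Ioo (0 : ℝ) (1 / 2) ∧
    p.2.2 ∈ Set.Ioo (0 : ℝ) (1 / 2)}

/-- `O₁`: the connected component of `(0,1/2)³ \ Ω` containing `(1/6, 1/6, 1/6)`. -/
def O₁ : Set (ℝ × ℝ × ℝ) := connectedComponentIn (cube \ OmegaSet) (1 / 6, 1 / 6, 1 / 6)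

/-- `O₃`: the connected component of `(0,1/2)³ \ Ω` containing `(1/6, 1/4, 1/3)`. -/
def O₃ : Set (ℝ × ℝ × ℝ) := connectedComponentIn (cube \ OmegaSet) (1 / 6, 1 / 4, 1 / 3)

/-- `x̂(h) = (6h - 1 - √(4h² + 4h - 3))/8`. -/
noncomputable def xhat (h : ℝ) : ℝ := (6 * h - 1 - Real.sqrt (4 * h ^ 2 + 4 * h - 3)) / 8

/-- The point `(a₁, a₂, a₃)` associated to `SO(k+l+m)/SO(k)×SO(l)×SO(m)`. -/
def aPoint (k l m : ℕ) : ℝ × ℝ × ℝ :=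
  ((k : ℝ) / (2 * ((k : ℝ) + l + m - 2)), (l : ℝ) / (2 * ((k : ℝ) + l + m - 2)),
    (m : ℝ) / (2 * ((k : ℝ) + l + m - 2)))

/-! ### Negativity of `Q` -/

/-- The polynomial `Q` in the variables `t = 2 s₁ - 1`, `p = s₂`, `q = s₃`, made homogeneous of
degree 12 by a variable `M` of weight 1, where `t, p, q` have weights `1, 2, 3`. -/
def Qhom (M t p q : ℝ) : ℝ :=
  (t * M ^ 2 + 4 * q) * (t ^ 2 * (t + 2 * M) * (2 * t ^ 2 + 2 * t * M + M ^ 2) * M ^ 4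
      + 60 * q * t ^ 2 * M ^ 4 - 768 * q ^ 2 * t * M ^ 2 - 4096 * q ^ 3)
    - 4 * (M + t) * (t * M ^ 2 + 4 * q) * (t * M ^ 2 - 32 * q) * (5 * t * M ^ 2 + 32 * q) * p
    - 4 * (M + t) ^ 2 * (13 * t ^ 2 * M ^ 4 + 320 * q * t * M ^ 2 + 1024 * q ^ 2) * p ^ 2
    + 64 * t * M ^ 2 * (t * M ^ 2 - 32 * q) * p ^ 3
    + 1024 * (M + t) * t * M ^ 2 * p ^ 4

set_option maxHeartbeats 2000000 in
/-- A quartic form in `w, r, e` whose coefficients are polynomials in `x` with nonnegative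
coefficients. -/
def certificate (x w r e : ℝ) : ℝ :=
  (1048576 + 37748736 * x + 632291328 * x ^ 2 + 6539968512 * x ^ 3 + 46745911296 * x ^ 4
      + 244802912256 * x ^ 5 + 971519754240 * x ^ 6 + 2980203134976 * x ^ 7
      + 7141162881024 * x ^ 8 + 13410914107392 * x ^ 9 + 19673275023360 * x ^ 10
      + 22307665379328 * x ^ 11 + 19168745250816 * x ^ 12 + 12068081270784 * x ^ 13
      + 5250398994432 * x ^ 14 + 1410554953728 * x ^ 15 + 176319369216 * x ^ 16)
      * (e ^ 4)
    + (65536 + 2949120 * x + 56082432 * x ^ 2 + 627376128 * x ^ 3 + 4718235648 * x ^ 4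
      + 25564999680 * x ^ 5 + 103849344000 * x ^ 6 + 323757139968 * x ^ 7
      + 784603210752 * x ^ 8 + 1485186637824 * x ^ 9 + 2190847067136 * x ^ 10
      + 2493871441920 * x ^ 11 + 2148704381952 * x ^ 12 + 1355194810368 * x ^ 13
      + 590257373184 * x ^ 14 + 158663245824 * x ^ 15 + 19832905728 * x ^ 16)
      * (r * e ^ 3)
    + (1024 + 71680 * x + 1619456 * x ^ 2 + 19864064 * x ^ 3 + 157997632 * x ^ 4
      + 887805696 * x ^ 5 + 3695799168 * x ^ 6 + 11717015808 * x ^ 7 + 28727492160 * x ^ 8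
      + 54819763200 * x ^ 9 + 81321228288 * x ^ 10 + 92928632832 * x ^ 11
      + 80279313408 * x ^ 12 + 50721914880 * x ^ 13 + 22116188160 * x ^ 14
      + 5948080128 * x ^ 15 + 743510016 * x ^ 16)
      * (r ^ 2 * e ^ 2)
    + (512 * x + 15104 * x ^ 2 + 207232 * x ^ 3 + 1754432 * x ^ 4 + 10250624 * x ^ 5
      + 43785728 * x ^ 6 + 141262592 * x ^ 7 + 350516672 * x ^ 8 + 674413568 * x ^ 9
      + 1006126080 * x ^ 10 + 1154199552 * x ^ 11 + 999712768 * x ^ 12 + 632733696 * x ^ 13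
      + 276185088 * x ^ 14 + 74317824 * x ^ 15 + 9289728 * x ^ 16)
      * (r ^ 3 * e)
    + (524288 * x + 21364736 * x ^ 2 + 353107968 * x ^ 3 + 3365142528 * x ^ 4
      + 21300019200 * x ^ 5 + 96306831360 * x ^ 6 + 324111974400 * x ^ 7 + 830871281664 * x ^ 8
      + 1640499609600 * x ^ 9 + 2498617663488 * x ^ 10 + 2913950121984 * x ^ 11
      + 2556199378944 * x ^ 12 + 1632855490560 * x ^ 13 + 716994478080 * x ^ 14
      + 193491763200 * x ^ 15 + 24186470400 * x ^ 16)
      * (w * e ^ 3)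
    + (16384 * x + 1093632 * x ^ 2 + 21446656 * x ^ 3 + 223271936 * x ^ 4 + 1491394560 * x ^ 5
      + 6989583360 * x ^ 6 + 24124176384 * x ^ 7 + 62989725696 * x ^ 8 + 126076207104 * x ^ 9
      + 193992717312 * x ^ 10 + 227964119040 * x ^ 11 + 201089129472 * x ^ 12
      + 128950714368 * x ^ 13 + 56761565184 * x ^ 14 + 15336013824 * x ^ 15
      + 1917001728 * x ^ 16)
      * (w * r * e ^ 2)
    + (12800 * x ^ 2 + 323072 * x ^ 3 + 3766400 * x ^ 4 + 26953728 * x ^ 5 + 132529408 * x ^ 6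
      + 474087936 * x ^ 7 + 1272660096 * x ^ 8 + 2603452416 * x ^ 9 + 4075352064 * x ^ 10
      + 4853403648 * x ^ 11 + 4324546560 * x ^ 12 + 2793111552 * x ^ 13 + 1235091456 * x ^ 14
      + 334430208 * x ^ 15 + 41803776 * x ^ 16)
      * (w * r ^ 2 * e)
    + (128 * x ^ 3 + 3008 * x ^ 4 + 32384 * x ^ 5 + 211456 * x ^ 6 + 934144 * x ^ 7
      + 2947648 * x ^ 8 + 6833152 * x ^ 9 + 11779072 * x ^ 10 + 15093760 * x ^ 11
      + 14194688 * x ^ 12 + 9519104 * x ^ 13 + 4308992 * x ^ 14 + 1179648 * x ^ 15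
      + 147456 * x ^ 16)
      * (w * r ^ 3)
    + (65536 * x ^ 2 + 4161536 * x ^ 3 + 67391488 * x ^ 4 + 569229312 * x ^ 5
      + 3070377984 * x ^ 6 + 11586699264 * x ^ 7 + 32080023552 * x ^ 8 + 66785181696 * x ^ 9
      + 105549668352 * x ^ 10 + 126328356864 * x ^ 11 + 112837238784 * x ^ 12
      + 72961523712 * x ^ 13 + 32280477696 * x ^ 14 + 8742961152 * x ^ 15 + 1092870144 * x ^ 16)
      * (w ^ 2 * e ^ 2)
    + (106496 * x ^ 3 + 2171904 * x ^ 4 + 20447232 * x ^ 5 + 118000640 * x ^ 6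
      + 466716672 * x ^ 7 + 1337573376 * x ^ 8 + 2858311680 * x ^ 9 + 4608691200 * x ^ 10
      + 5600729088 * x ^ 11 + 5059642368 * x ^ 12 + 3297853440 * x ^ 13 + 1466449920 * x ^ 14
      + 398131200 * x ^ 15 + 49766400 * x ^ 16)
      * (w ^ 2 * r * e)
    + (2368 * x ^ 4 + 43264 * x ^ 5 + 358272 * x ^ 6 + 1791232 * x ^ 7 + 6051136 * x ^ 8
      + 14582784 * x ^ 9 + 25712640 * x ^ 10 + 33392640 * x ^ 11 + 31656960 * x ^ 12
      + 21331968 * x ^ 13 + 9682944 * x ^ 14 + 2654208 * x ^ 15 + 331776 * x ^ 16)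
      * (w ^ 2 * r ^ 2)
    + (290816 * x ^ 4 + 4407296 * x ^ 5 + 31326208 * x ^ 6 + 138248192 * x ^ 7
      + 421744640 * x ^ 8 + 935493632 * x ^ 9 + 1543446528 * x ^ 10 + 1903017984 * x ^ 11
      + 1735057408 * x ^ 12 + 1137475584 * x ^ 13 + 507543552 * x ^ 14 + 138018816 * x ^ 15
      + 17252352 * x ^ 16)
      * (w ^ 3 * e)
    + (12288 * x ^ 5 + 156672 * x ^ 6 + 940032 * x ^ 7 + 3492864 * x ^ 8 + 8896512 * x ^ 9
      + 16235520 * x ^ 10 + 21559296 * x ^ 11 + 20739072 * x ^ 12 + 14106624 * x ^ 13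
      + 6438912 * x ^ 14 + 1769472 * x ^ 15 + 221184 * x ^ 16)
      * (w ^ 3 * r)
    + (8192 * x ^ 6 + 81920 * x ^ 7 + 389120 * x ^ 8 + 1146880 * x ^ 9 + 2301952 * x ^ 10
      + 3260416 * x ^ 11 + 3276800 * x ^ 12 + 2293760 * x ^ 13 + 1064960 * x ^ 14
      + 294912 * x ^ 15 + 36864 * x ^ 16)
      * (w ^ 4)

set_option maxHeartbeats 2000000 in
lemma certificate_pos {x w r e : ℝ} (hx : 0 ≤ x) (hw : 0 ≤ w) (hr : 0 ≤ r) (he : 0 < e) :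
    0 < certificate x w r e := by
  unfold certificate
  positivity

set_option maxHeartbeats 2000000 in
/-- The values substituted for `t, p, q` are `M t`, `M² s₂`, `M³ s₃` at the point with coordinates
`aᵢ = (x (x + 1) + βᵢ) / M`, where `β₁ + β₂ + β₃ = 1`. -/
lemma Qhom_eq_neg_certificate (x r e : ℝ) :
    Qhom ((1 + 2 * x) * (2 + 2 * x)) (2 * x ^ 2)
      (3 * (x * (x + 1)) ^ 2 + 2 * (x * (x + 1)) + (9 * e + r / 4))
      ((x * (x + 1)) ^ 3 + (x * (x + 1)) ^ 2 + (x * (x + 1)) * (9 * e + r / 4) + e)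
      = -certificate x (1 - 27 * e - r) r e := by
  unfold Qhom certificate
  ring

lemma pow_mul_Qpoly (a b c M : ℝ) :
    M ^ 12 * Qpoly a b c = Qhom M (M * (2 * (a + b + c) - 1)) (M ^ 2 * (a * b + a * c + b * c))
      (M ^ 3 * (a * b * c)) := by
  unfold Qpoly Qhom
  ring

/-- Schur's inequality of degree one, in elementary symmetric form. -/
lemma schur {u v z : ℝ} (hu : 0 < u) (hv : 0 < v) (hz : 0 < z) (h : u + v + z = 1) :
    0 ≤ 1 - 4 * (u * v + u * z + v * z) + 9 * (u * v * z) := by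
  have key : 1 - 4 * (u * v + u * z + v * z) + 9 * (u * v * z)
      = u * (u - v) * (u - z) + v * (v - u) * (v - z) + z * (z - u) * (z - v) := by
    obtain rfl : z = 1 - u - v := by linarith
    ring
  rw [key]
  rcases le_total u v with h1 | h1 <;> rcases le_total v z with h2 | h2 <;>
    rcases le_total u z with h3 | h3 <;>
    nlinarith [mul_nonneg (sub_nonneg.2 h1) (sub_nonneg.2 h2),
      mul_nonneg (sub_nonneg.2 h1) (sub_nonneg.2 h3),
      mul_nonneg (sub_nonneg.2 h2) (sub_nonneg.2 h3),
      mul_nonneg hu.le (mul_nonneg (sub_nonneg.2 h1) (sub_nonneg.2 h3)),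
      mul_nonneg hv.le (mul_nonneg (sub_nonneg.2 h1) (sub_nonneg.2 h2)),
      mul_nonneg hz.le (mul_nonneg (sub_nonneg.2 h2) (sub_nonneg.2 h3)),
      mul_nonneg hu.le (sq_nonneg (u - v)), mul_nonneg hu.le (sq_nonneg (u - z)),
      mul_nonneg hv.le (sq_nonneg (u - v)), mul_nonneg hv.le (sq_nonneg (v - z)),
      mul_nonneg hz.le (sq_nonneg (u - z)), mul_nonneg hz.le (sq_nonneg (v - z))]

lemma nine_mul_le {u v z : ℝ} (hu : 0 < u) (hv : 0 < v) (hz : 0 < z) (h : u + v + z = 1) :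
    9 * (u * v * z) ≤ u * v + u * z + v * z := by
  have key : u * v + u * z + v * z - 9 * (u * v * z)
      = u * (v - z) ^ 2 + v * (u - z) ^ 2 + z * (u - v) ^ 2 := by
    obtain rfl : z = 1 - u - v := by linarith
    ring
  have : 0 ≤ u * (v - z) ^ 2 + v * (u - z) ^ 2 + z * (u - v) ^ 2 := by positivity
  linarith

/-- The coordinates `t` and `aᵢ` are written with the parameter `x` and barycentric coordinates
`u, v, z` of the triangular cross-section. -/
lemma Qpoly_neg_of_param {a b c x u v z : ℝ} (hx : 0 ≤ x) (hu : 0 < u) (hv : 0 < v) (hz : 0 < z)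
    (h : u + v + z = 1)
    (ha : a * ((1 + 2 * x) * (2 + 2 * x)) = x * (x + 1) + u)
    (hb : b * ((1 + 2 * x) * (2 + 2 * x)) = x * (x + 1) + v)
    (hc : c * ((1 + 2 * x) * (2 + 2 * x)) = x * (x + 1) + z) :
    Qpoly a b c < 0 := by
  set M := (1 + 2 * x) * (2 + 2 * x) with hM
  have hMpos : 0 < M := by positivity
  set e := u * v * z with he
  set r := 4 * (u * v + u * z + v * z - 9 * e) with hr
  have h1 : M * (2 * (a + b + c) - 1) = 2 * x ^ 2 := by
    linear_combination 2 * ha + 2 * hb + 2 * hc + 2 * h - hM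
  have h2 : M ^ 2 * (a * b + a * c + b * c)
      = 3 * (x * (x + 1)) ^ 2 + 2 * (x * (x + 1)) + (9 * e + r / 4) := by
    calc _ = (a * M) * (b * M) + (a * M) * (c * M) + (b * M) * (c * M) := by ring
      _ = _ := by
        rw [ha, hb, hc, hr]
        linear_combination 2 * (x * (x + 1)) * h
  have h3 : M ^ 3 * (a * b * c)
      = (x * (x + 1)) ^ 3 + (x * (x + 1)) ^ 2 + (x * (x + 1)) * (9 * e + r / 4) + e := by
    calc _ = (a * M) * (b * M) * (c * M) := by ring
      _ = _ := by
        rw [ha, hb, hc, hr, he]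
        linear_combination (x * (x + 1)) ^ 2 * h
  have h4 := pow_mul_Qpoly a b c M
  rw [h1, h2, h3, hM, Qhom_eq_neg_certificate, ← hM] at h4
  have h5 : 0 < certificate x (1 - 27 * e - r) r e := by
    apply certificate_pos hx _ _ (by positivity)
    · have := schur hu hv hz h
      rw [hr, he]
      linarith
    · have := nine_mul_le hu hv hz h
      rw [hr, he]
      linarith
  by_contra hcon
  have : 0 ≤ M ^ 12 * Qpoly a b c := mul_nonneg (by positivity) (not_lt.1 hcon)
  linarith

/-! ### The region above the cusps -/

/-- The part of the slab `0 ≤ t < 1/2`, `t = 2 (a₁ + a₂ + a₃) - 1`, where every coordinate exceeds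
the nonnegative root `y` of `4 y² + 2 t y = t`. -/
def region : Set (ℝ × ℝ × ℝ) :=
  {p | ∃ t, p.1 + p.2.1 + p.2.2 = (1 + t) / 2 ∧ 0 ≤ t ∧ t < 1 / 2 ∧
    (0 < p.1 ∧ t < 4 * p.1 ^ 2 + 2 * t * p.1) ∧
    (0 < p.2.1 ∧ t < 4 * p.2.1 ^ 2 + 2 * t * p.2.1) ∧
    (0 < p.2.2 ∧ t < 4 * p.2.2 ^ 2 + 2 * t * p.2.2)}

lemma half_lt {t a : ℝ} (ht : t < 1 / 2) (ha : 0 < a)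
    (h : t < 4 * a ^ 2 + 2 * t * a) : t < 2 * a := by
  by_contra hcon
  nlinarith

lemma region_subset_cube : region ⊆ cube := by
  rintro ⟨a, b, c⟩ ⟨t, hs, ht0, ht, ⟨ha, ha'⟩, ⟨hb, hb'⟩, ⟨hc, hc'⟩⟩
  have h1 := half_lt ht ha ha'
  have h2 := half_lt ht hb hb'
  have h3 := half_lt ht hc hc'
  simp only at ha hb hc h1 h2 h3 hs
  refine ⟨⟨ha, ?_⟩, ⟨hb, ?_⟩, ⟨hc, ?_⟩⟩ <;> simp only <;> linarith

lemma Qpoly_neg {p : ℝ × ℝ × ℝ} (hp : p ∈ region) : Qpoly p.1 p.2.1 p.2.2 < 0 := by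
  obtain ⟨a, b, c⟩ := p
  obtain ⟨t, hs, ht0, ht, ⟨ha, ha'⟩, ⟨hb, hb'⟩, ⟨hc, hc'⟩⟩ := hp
  simp only at *
  obtain ⟨y, hy0, hy1, hy⟩ : ∃ y : ℝ, 0 ≤ y ∧ y < 1 / 4 ∧ 4 * y ^ 2 + 2 * t * y = t := by
    have hsq := Real.sq_sqrt (show 0 ≤ t ^ 2 + 4 * t by positivity)
    refine ⟨(√(t ^ 2 + 4 * t) - t) / 4, ?_, ?_, ?_⟩
    · have := Real.le_sqrt_of_sq_le (show t ^ 2 ≤ t ^ 2 + 4 * t by linarith)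
      linarith
    · have := (Real.sqrt_lt' (show 0 < 1 + t by linarith)).2
        (show t ^ 2 + 4 * t < (1 + t) ^ 2 by nlinarith)
      linarith
    · nlinarith
  have gt : ∀ {d : ℝ}, 0 < d → t < 4 * d ^ 2 + 2 * t * d → y < d := by
    intro d hd hd'
    by_contra hcon
    nlinarith
  have hya := gt ha ha'
  have hyb := gt hb hb'
  have hyc := gt hc hc'
  -- `x` is chosen so that `y = x / (2 (1 + 2 x))`, which is `x (x + 1) / M`.
  obtain ⟨x, hx0, hx⟩ : ∃ x : ℝ, 0 ≤ x ∧ y * (2 * (1 + 2 * x)) = x := by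
    have hpos : 0 < 1 - 4 * y := by linarith
    have hne := hpos.ne'
    refine ⟨2 * y / (1 - 4 * y), by positivity, ?_⟩
    rw [eq_div_iff hne]
    linear_combination 4 * y * div_mul_cancel₀ (2 * y) hne
  set M := (1 + 2 * x) * (2 + 2 * x) with hM
  have hMpos : 0 < M := by positivity
  have hyM : y * M = x * (x + 1) := by
    rw [hM]; linear_combination (x + 1) * hx
  have htM : t * M = 2 * x ^ 2 := by
    rw [hM]
    linear_combination -2 * (1 + 2 * x) ^ 2 * hy
      + (2 * t * (1 + 2 * x) + 2 * x + 4 * y * (1 + 2 * x)) * hx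
  refine Qpoly_neg_of_param hx0 (u := (a - y) * M) (v := (b - y) * M) (z := (c - y) * M)
    (mul_pos (by linarith) hMpos) (mul_pos (by linarith) hMpos) (mul_pos (by linarith) hMpos)
    ?_ ?_ ?_ ?_
  · linear_combination M * hs + (1 / 2) * htM - 3 * hyM + (1 / 2) * hM
  · linear_combination hyM
  · linear_combination hyM
  · linear_combination hyM

/-- The one-coordinate inequality behind star-shapedness: the segment in the `(t, y)`-plane from
`(0, 1/6)` to a point above the graph of the nonnegative root `y` of `4 y² + 2 t y = t` stays above
that graph. -/
lemma coord_segment {t d s : ℝ} (ht : t < 1 / 2) (hd : 0 < d)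
    (h : t < 4 * d ^ 2 + 2 * t * d) (hs0 : 0 ≤ s) (hs1 : s ≤ 1) :
    0 < (1 - s) * (1 / 6) + s * d ∧
      s * t < 4 * ((1 - s) * (1 / 6) + s * d) ^ 2 + 2 * (s * t) * ((1 - s) * (1 / 6) + s * d) := by
  have h2 := half_lt ht hd h
  rcases hs0.eq_or_lt with rfl | hs
  · norm_num
  refine ⟨by nlinarith, ?_⟩
  have key : 4 * ((1 - s) * (1 / 6) + s * d) ^ 2 + 2 * (s * t) * ((1 - s) * (1 / 6) + s * d) - s * t
      = s ^ 2 * (4 * d ^ 2 + 2 * t * d - t) + s * (1 - s) * (2 * (2 * d - t) / 3)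
        + (1 - s) ^ 2 / 9 := by ring
  have h3 : 0 < s ^ 2 * (4 * d ^ 2 + 2 * t * d - t) := mul_pos (by positivity) (by linarith)
  have h4 : 0 ≤ s * (1 - s) * (2 * (2 * d - t) / 3) :=
    mul_nonneg (mul_nonneg hs0 (by linarith)) (by linarith)
  have h5 : 0 ≤ (1 - s) ^ 2 / 9 := by positivity
  linarith

lemma region_segment {p : ℝ × ℝ × ℝ} (hp : p ∈ region) :
    segment ℝ (1 / 6, 1 / 6, 1 / 6) p ⊆ region := by
  rintro _ ⟨r, s, hr, hs, hrs, rfl⟩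
  obtain rfl : r = 1 - s := by linarith
  obtain ⟨t, hsum, ht0, ht, ⟨ha, ha'⟩, ⟨hb, hb'⟩, ⟨hc, hc'⟩⟩ := hp
  have hs1 : s ≤ 1 := by linarith
  refine ⟨s * t, ?_, by positivity, by nlinarith, coord_segment ht ha ha' hs hs1,
    coord_segment ht hb hb' hs hs1, coord_segment ht hc hc' hs hs1⟩
  simp only [Prod.smul_mk, Prod.fst_add, Prod.snd_add, Prod.smul_fst, Prod.smul_snd, smul_eq_mul]
  linear_combination s * hsum

lemma region_subset_O₁ : region ⊆ O₁ := by
  intro p hp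
  refine (convex_segment (1 / 6, 1 / 6, 1 / 6) p).isPreconnected.subset_connectedComponentIn
    (left_mem_segment ℝ _ _) ?_ (right_mem_segment ℝ _ _)
  intro q hq
  have hq' := region_segment hp hq
  exact ⟨region_subset_cube hq', (Qpoly_neg hq').ne⟩

/-! ### The points coming from generalized Wallach spaces -/

theorem stmt8 (k l m : ℕ) (hkl : l ≤ k) (hlm : m ≤ l) (hm : 1 ≤ m) (hl : 2 ≤ l)
    (hlt : ((k : ℝ) + l) / (4 * ((k : ℝ) + l + m - 2)) <
      xhat (((k : ℝ) + l + m) / (2 * ((k : ℝ) + l + m - 2)))) :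
    aPoint k l m ∈ O₁ := by
  have hm' : (1 : ℝ) ≤ m := by exact_mod_cast hm
  have hl' : (2 : ℝ) ≤ l := by exact_mod_cast hl
  have hkl' : (l : ℝ) ≤ k := by exact_mod_cast hkl
  have hlm' : (m : ℝ) ≤ l := by exact_mod_cast hlm
  set N : ℝ := (k : ℝ) + l + m - 2 with hN
  have hNpos : 0 < N := by linarith
  -- Clearing the square root turns the hypothesis into `t < 4 a₃² + 2 t a₃` with `t = 2 / N`.
  have key : 2 / N < 4 * (m / (2 * N)) ^ 2 + 2 * (2 / N) * (m / (2 * N)) := by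
    have h1 : √(4 * (((k : ℝ) + l + m) / (2 * N)) ^ 2 + 4 * (((k : ℝ) + l + m) / (2 * N)) - 3)
        < 2 / N + 4 * (m / (2 * N)) := by
      unfold xhat at hlt
      have : 2 / N + 4 * (m / (2 * N)) = 6 * (((k : ℝ) + l + m) / (2 * N)) - 1
          - 8 * (((k : ℝ) + l) / (4 * N)) := by
        field_simp
        rw [hN]; ring
      linarith
    rw [Real.sqrt_lt' (by positivity)] at h1
    have h2 : ((k : ℝ) + l + m) / (2 * N) = 1 / 2 + 1 / N := by
      field_simp
      linarith
    rw [h2] at h1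
    have h3 : 2 / N = 2 * (1 / N) := by ring
    rw [h3] at h1 ⊢
    nlinarith
  have key' : 2 * N < m ^ 2 + 2 * m := by
    have h1 : 4 * ((m : ℝ) / (2 * N)) ^ 2 + 2 * (2 / N) * (m / (2 * N)) - 2 / N
        = (m ^ 2 + 2 * m - 2 * N) / N ^ 2 := by
      field_simp
      ring
    have h2 : 0 < (m ^ 2 + 2 * m - 2 * N) / N ^ 2 := by linarith
    have h3 := (div_pos_iff_of_pos_right (show 0 < N ^ 2 by positivity)).1 h2
    linarith
  -- Since `2 N ≥ 6 m - 4`, the previous bound excludes `m = 2`, and `l ≥ 2` excludes `m = 1`.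
  have hm3 : (3 : ℝ) ≤ m := by
    have : 3 ≤ m := by
      by_contra hcon
      have : m = 1 ∨ m = 2 := by omega
      rcases this with h | h
      · have h' : (m : ℝ) = 1 := by exact_mod_cast h
        rw [h'] at key'
        linarith
      · have h' : (m : ℝ) = 2 := by exact_mod_cast h
        rw [h'] at key'
        linarith
    exact_mod_cast this
  have hN4 : 4 < N := by linarith
  have mono : ∀ j : ℝ, (m : ℝ) ≤ j → 0 < j / (2 * N) ∧
      2 / N < 4 * (j / (2 * N)) ^ 2 + 2 * (2 / N) * (j / (2 * N)) := by
    intro j hj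
    have hj0 : 0 < j := by linarith
    refine ⟨by positivity, key.trans_le ?_⟩
    gcongr
  apply region_subset_O₁
  refine ⟨2 / N, ?_, by positivity, ?_, mono k (by linarith), mono l hlm', mono m le_rfl⟩
  · simp only [aPoint, ← hN]
    field_simp
    linarith
  · rw [div_lt_div_iff₀ hNpos (by norm_num)]
    linarith
end
end

section
/- Let k ≥ l ≥ m ≥ 1 be integers with l ≥ 2. If (k+l)/(4(k+l+m−2)) < (√2−1)/2, then the point (a₁,a₂,a₃) = (k/(2(k+l+m−2)), l/(2(k+l+m−2)), m/(2(k+l+m−2))) lies in O₁. -/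
/-!
The equations for an invariant Einstein metric on a generalized Wallach space say that three
quadratic forms `A₁, A₂, A₃` in the metric coefficients coincide, where
`A₁ = x₂x₃ + a₁(x₁² - x₂² - x₃²)` and `A₂, A₃` are its analogues. For `λ₁ + λ₂ + λ₃ = 0` the
determinant of `λ₁A₁ + λ₂A₂ + λ₃A₃` is a binary cubic form, and `Qpoly` is `-256` times the
discriminant of that form (`Qpoly_eq_disc`).

The vectors `v₁ = (-(a₂+a₃), a₃, a₂)`, `v₂ = (a₃, -(a₁+a₃), a₁)`, `v₃ = (a₂, a₁, -(a₁+a₂))` have sum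
zero, and the cubic is negative at each of them as soon as the `aᵢ` are positive with pairwise sums
below `√2 - 1` (`vertexValue_pos`). A cubic with vanishing discriminant is `ℓ² m` with `ℓ, m` linear
(`exists_sq_mul_linear`), so `m` would be negative at `v₁, v₂, v₃`, contradicting
`m v₁ + m v₂ + m v₃ = 0`. Hence `Ω` misses the convex set of such `(a₁, a₂, a₃)`. This set lies in
the cube and contains `(1/6, 1/6, 1/6)`, so it is contained in `O₁`; the hypothesis on `k, l, m` puts
the given point into it, since `a₁ + a₂` is the largest pairwise sum.
-/

noncomputable section

/-- The discriminant of the binary cubic form `A x³ + B x² y + C x y² + D y³`. -/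
def cubicDisc (A B C D : ℝ) : ℝ :=
  B ^ 2 * C ^ 2 - 4 * A * C ^ 3 - 4 * B ^ 3 * D - 27 * A ^ 2 * D ^ 2 + 18 * A * B * C * D

/-- The coefficient of `x³` in the determinant of the pencil at `(λ₁, λ₂, λ₃) = (x, y, -x - y)`.
Exchanging `a` and `b` gives the coefficient of `y³`. -/
def coeffCube (a c : ℝ) : ℝ := (a - c) * (a + c) ^ 2

/-- The coefficient of `x² y` in the determinant of the pencil at `(x, y, -x - y)`.
Exchanging `a` and `b` gives the coefficient of `x y²`. -/
def coeffMixed (a b c : ℝ) : ℝ :=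
  -a ^ 2 * b + a ^ 2 * c - 2 * a * b * c - 2 * a * c ^ 2 - b * c ^ 2 - 3 * c ^ 3
    + a / 2 + b / 2 + c / 2 - 1 / 4

/-- The determinant of the pencil `λ₁A₁ + λ₂A₂ + λ₃A₃` at `(λ₁, λ₂, λ₃) = (x, y, -x - y)`,
for the parameters `(a₁, a₂, a₃) = (a, b, c)`. -/
def pencilCubic (a b c x y : ℝ) : ℝ :=
  coeffCube a c * x ^ 3 + coeffMixed a b c * x ^ 2 * y + coeffMixed b a c * x * y ^ 2
    + coeffCube b c * y ^ 3

/-- Minus the value of the pencil determinant at `λ = (b, a, -(a + b))`. At this `λ` the forms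
`x₁²` and `x₂²` both have coefficient `c * (a + b)` in the pencil, and the determinant depends on
`a, b` only through `a + b` and `a * b`. -/
def vertexValue (a b c : ℝ) : ℝ :=
  (a + b) ^ 3 * c ^ 3 + a * b * (a + b) / 2 * (4 * c ^ 2 * (a + b) + 1 / 2 - (a + b) - c)

theorem Qpoly_eq_disc (a b c : ℝ) :
    Qpoly a b c = -256 * cubicDisc (coeffCube a c) (coeffMixed a b c) (coeffMixed b a c)
      (coeffCube b c) := by
  simp only [Qpoly, cubicDisc, coeffCube, coeffMixed]
  ring

/-- A real binary cubic with zero discriminant has a real double linear factor. -/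
theorem exists_sq_mul_linear {A B C D : ℝ} (h : cubicDisc A B C D = 0) :
    ∃ p q u v : ℝ, ∀ x y : ℝ,
      A * x ^ 3 + B * x ^ 2 * y + C * x * y ^ 2 + D * y ^ 3
        = (p * x + q * y) ^ 2 * (u * x + v * y) := by
  -- Up to a constant, `P x² + R x y + S y²` is the Hessian; it has discriminant zero here.
  obtain ⟨P, hP⟩ : ∃ P, P = B ^ 2 - 3 * A * C := ⟨_, rfl⟩
  obtain ⟨R, hR⟩ : ∃ R, R = B * C - 9 * A * D := ⟨_, rfl⟩
  obtain ⟨S, hS⟩ : ∃ S, S = C ^ 2 - 3 * B * D := ⟨_, rfl⟩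
  have hRR : R ^ 2 = 4 * P * S := by
    subst hP hR hS
    unfold cubicDisc at h
    linear_combination (-3) * h
  by_cases hP0 : P = 0
  · have hR0 : R = 0 := by
      have : R ^ 2 = 0 := by rw [hRR, hP0]; ring
      exact pow_eq_zero_iff (two_ne_zero) |>.1 this
    by_cases hA : A = 0
    · have hB : B = 0 := by
        have : B ^ 2 = 0 := by rw [hP0, hA] at hP; linarith
        exact pow_eq_zero_iff (two_ne_zero) |>.1 this
      refine ⟨0, 1, C, D, fun x y => ?_⟩
      rw [hA, hB]
      ring
    · -- The Hessian vanishes, so the cubic is `A (x + B y / (3 A))³`.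
      have hC : C = B ^ 2 / (3 * A) := by
        field_simp
        linarith
      have hD : D = B ^ 3 / (27 * A ^ 2) := by
        have : 9 * A * D = B * C := by linarith
        rw [hC] at this
        field_simp at this ⊢
        linarith
      refine ⟨1, B / (3 * A), A, B / 3, fun x y => ?_⟩
      rw [hC, hD]
      field_simp
      ring
  · -- The double root is `x / y = -R / (2 P)`.
    have hC : C = 2 * (R / (2 * P)) * B - 3 * (R / (2 * P)) ^ 2 * A := by
      have h1 : P * C - R * B + 3 * A * S = 0 := by
        subst hP hR hS
        ring
      field_simp
      linear_combination 4 * P * h1 + 3 * A * hRR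
    have hD : D = (R / (2 * P)) ^ 2 * B - 2 * (R / (2 * P)) ^ 3 * A := by
      have h1 : D * P ^ 2 = S * (B * P - A * R) := by
        subst hP hR hS
        unfold cubicDisc at h
        linear_combination (-B) * h
      field_simp
      linear_combination 4 * P * h1 - (B * P - A * R) * hRR
    refine ⟨1, R / (2 * P), A, B - 2 * (R / (2 * P)) * A, fun x y => ?_⟩
    rw [hC, hD]
    ring

/-- Write `σ = a + b`. If the bracket in `vertexValue` is negative, then `4ab ≤ σ²` bounds the value
from below by the one at `a = b = σ/2`. The latter has the sign of
`(2c + 1)(8c² - 4c(1 - σ) + 1 - 2σ)`, where the quadratic in `c` has negative discriminant exactly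
when `(σ + 1)² < 2`; this is where the constant `√2 - 1` comes from. -/
theorem vertexValue_pos {a b c : ℝ} (ha : 0 < a) (hb : 0 < b) (hc : 0 < c)
    (h : a + b < √2 - 1) : 0 < vertexValue a b c := by
  have h2 : √2 ^ 2 = 2 := Real.sq_sqrt (by norm_num)
  obtain ⟨s, hs⟩ : ∃ s, s = a + b := ⟨_, rfl⟩
  have hs0 : 0 < s := by linarith
  have hs1 : (s + 1) ^ 2 < 2 := by
    rw [← h2]
    exact pow_lt_pow_left₀ (by linarith) (by linarith) two_ne_zero
  have hab : 4 * (a * b) ≤ s ^ 2 := by nlinarith [sq_nonneg (a - b)]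
  have hquad : 0 < 8 * c ^ 2 - 4 * c * (1 - s) + 1 - 2 * s := by
    nlinarith [sq_nonneg (4 * c - (1 - s))]
  obtain ⟨Z, hZ⟩ : ∃ Z, Z = 4 * c ^ 2 * s + 1 / 2 - s - c := ⟨_, rfl⟩
  have hsum : 0 < 8 * c ^ 3 + Z := by
    have : 8 * c ^ 3 + Z = (2 * c + 1) * (8 * c ^ 2 - 4 * c * (1 - s) + 1 - 2 * s) / 2 := by
      rw [hZ]; ring
    rw [this]
    positivity
  have hmain : 0 < s ^ 2 * c ^ 3 + a * b / 2 * Z := by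
    rcases le_total 0 Z with hZ0 | hZ0
    · positivity
    · have h1 : s ^ 2 * Z ≤ 4 * (a * b) * Z := mul_le_mul_of_nonpos_right hab hZ0
      have h3 : 0 < s ^ 2 * (8 * c ^ 3 + Z) := by positivity
      linarith
  have : vertexValue a b c = s * (s ^ 2 * c ^ 3 + a * b / 2 * Z) := by
    rw [hZ, hs]; unfold vertexValue; ring
  rw [this]
  positivity

theorem Qpoly_ne_zero {a b c : ℝ} (ha : 0 < a) (hb : 0 < b) (hc : 0 < c)
    (hab : a + b < √2 - 1) (hac : a + c < √2 - 1) (hbc : b + c < √2 - 1) :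
    Qpoly a b c ≠ 0 := by
  intro h0
  have hdisc : cubicDisc (coeffCube a c) (coeffMixed a b c) (coeffMixed b a c)
      (coeffCube b c) = 0 := by
    have := Qpoly_eq_disc a b c
    linarith
  obtain ⟨p, q, u, v, hf⟩ := exists_sq_mul_linear hdisc
  have e1 : pencilCubic a b c (-(b + c)) c = -vertexValue b c a := by
    simp only [pencilCubic, coeffCube, coeffMixed, vertexValue]; ring
  have e2 : pencilCubic a b c c (-(a + c)) = -vertexValue a c b := by
    simp only [pencilCubic, coeffCube, coeffMixed, vertexValue]; ring
  have e3 : pencilCubic a b c b a = -vertexValue a b c := by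
    simp only [pencilCubic, coeffCube, coeffMixed, vertexValue]; ring
  have key : ∀ x y, pencilCubic a b c x y < 0 → u * x + v * y < 0 := by
    intro x y hxy
    rw [pencilCubic, hf] at hxy
    by_contra! hn
    exact absurd (mul_nonneg (sq_nonneg (p * x + q * y)) hn) (not_le.2 hxy)
  have k1 := key _ _ (e1.trans_lt (neg_neg_of_pos (vertexValue_pos hb hc ha hbc)))
  have k2 := key _ _ (e2.trans_lt (neg_neg_of_pos (vertexValue_pos ha hc hb hac)))
  have k3 := key _ _ (e3.trans_lt (neg_neg_of_pos (vertexValue_pos ha hb hc hab)))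
  linarith

/-- The points with positive coordinates and pairwise sums below `√2 - 1`. -/
def smallSums : Set (ℝ × ℝ × ℝ) :=
  {p | 0 < p.1 ∧ 0 < p.2.1 ∧ 0 < p.2.2 ∧ p.1 + p.2.1 < √2 - 1 ∧ p.1 + p.2.2 < √2 - 1 ∧
    p.2.1 + p.2.2 < √2 - 1}

theorem convex_smallSums : Convex ℝ smallSums := by
  rintro ⟨x₁, x₂, x₃⟩ ⟨h1, h2, h3, h4, h5, h6⟩ ⟨y₁, y₂, y₃⟩ ⟨g1, g2, g3, g4, g5, g6⟩ s t hs ht hst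
  -- Each condition is a strict linear inequality, preserved by a convex combination.
  have pos : ∀ {x y : ℝ}, 0 < x → 0 < y → 0 < s * x + t * y := fun hx hy =>
    (convex_Ioi (0 : ℝ)) hx hy hs ht hst
  have lt : ∀ {x y : ℝ}, x < √2 - 1 → y < √2 - 1 → s * x + t * y < √2 - 1 := fun hx hy =>
    (convex_Iio (√2 - 1)) hx hy hs ht hst
  refine ⟨pos h1 g1, pos h2 g2, pos h3 g3, ?_, ?_, ?_⟩
  · have := lt h4 g4
    simp only [Prod.smul_mk, Prod.mk_add_mk, smul_eq_mul] at this ⊢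
    linarith
  · have := lt h5 g5
    simp only [Prod.smul_mk, Prod.mk_add_mk, smul_eq_mul] at this ⊢
    linarith
  · have := lt h6 g6
    simp only [Prod.smul_mk, Prod.mk_add_mk, smul_eq_mul] at this ⊢
    linarith

theorem smallSums_subset_O₁ : smallSums ⊆ O₁ := by
  have hlo : (1.4 : ℝ) < √2 := Real.lt_sqrt_of_sq_lt (by norm_num)
  have hup : √2 < (1.5 : ℝ) := by
    rw [Real.sqrt_lt' (by norm_num)]
    norm_num
  unfold O₁
  refine convex_smallSums.isPreconnected.subset_connectedComponentIn ?_ ?_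
  · refine ⟨?_, ?_, ?_, ?_, ?_, ?_⟩ <;> norm_num at hlo ⊢ <;> linarith
  · rintro ⟨x, y, z⟩ ⟨h1, h2, h3, h4, h5, h6⟩
    simp only at h1 h2 h3 h4 h5 h6
    refine ⟨⟨⟨h1, ?_⟩, ⟨h2, ?_⟩, ⟨h3, ?_⟩⟩, Qpoly_ne_zero h1 h2 h3 h4 h5 h6⟩ <;>
      norm_num at hup ⊢ <;> linarith

theorem stmt9 (k l m : ℕ) (hkl : l ≤ k) (hlm : m ≤ l) (hm : 1 ≤ m) (hl : 2 ≤ l)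
    (hlt : ((k : ℝ) + l) / (4 * ((k : ℝ) + l + m - 2)) < (Real.sqrt 2 - 1) / 2) :
    aPoint k l m ∈ O₁ := by
  apply smallSums_subset_O₁
  have hkl' : (l : ℝ) ≤ k := by exact_mod_cast hkl
  have hlm' : (m : ℝ) ≤ l := by exact_mod_cast hlm
  have hm' : (1 : ℝ) ≤ m := by exact_mod_cast hm
  have hl' : (2 : ℝ) ≤ l := by exact_mod_cast hl
  obtain ⟨N, hN⟩ : ∃ N : ℝ, N = (k : ℝ) + l + m - 2 := ⟨_, rfl⟩
  have hN0 : 0 < N := by linarith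
  have hk0 : (0 : ℝ) < k := by linarith
  have hl0 : (0 : ℝ) < l := by linarith
  have hm0 : (0 : ℝ) < m := by linarith
  rw [← hN, div_lt_iff₀ (by positivity)] at hlt
  simp only [smallSums, aPoint, Set.mem_ofPred_eq, ← hN, ← add_div]
  refine ⟨by positivity, by positivity, by positivity, ?_, ?_, ?_⟩ <;>
    rw [div_lt_iff₀ (by positivity)] <;> linarith
end
end

section
/- Let k ≥ l ≥ m ≥ 1 be integers with l ≥ 2. If m > √(2k+2l−4), then the point (a₁,a₂,a₃) = (k/(2(k+l+m−2)), l/(2(k+l+m−2)), m/(2(k+l+m−2))) lies in O₁. -/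
/-!
The idea is to join `aPoint k l m` to `(1/6, 1/6, 1/6)` inside the region where `Q < 0`.

On the open triangle `s₁ = 1/2`, `aᵢ > 0`, the polynomial `Q` collapses to
`-4096 s₃² (2 s₃ - s₂)²`, which is negative because `s₂ > 2 s₃` there
(`Qpoly_neg_of_mem_triangle`). This triangle is convex, lies in the cube, and contains
`(1/6, 1/6, 1/6)`. So it suffices to reach it from `aPoint k l m`.

The ray from `aPoint k l m` to the origin meets the triangle in `(k, l, m) / (2(k + l + m))`. The
segment in between consists of the points `(k, l, m) / (2(k + l + m - 2u))`, `0 ≤ u ≤ 1`, and for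
`u > 0` such a point is the Wallach point of the real triple `(k/u, l/u, m/u)`, where the Wallach
point of `(k, l, m)` means `(k, l, m) / (2(k + l + m - 2))`, as in `aPoint`. The condition
`m² > 2k + 2l - 4` is inherited by these larger triples, so everything reduces to showing that
`Q < 0` at the Wallach point of any real triple `k ≥ l ≥ m > 2` with `m² > 2k + 2l - 4`
(`Qpoly_wallach_neg`).

For that inequality, put `n = m - 2`, `y = (k - m) + (l - m)`, `z = (k - m)(l - m)`, and let
`g = y² - 4z = (k - l)²` and `w = n² - 2y = m² - (2k + 2l - 4)`, the slack in the hypothesis. After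
clearing denominators and eliminating higher powers of `n` and `y` by means of `n² = w + 2y` and
`y² = 4z + g`, the numerator of `-Q` becomes a polynomial in the nonnegative quantities
`n, y, z, g, w` all of whose coefficients are nonnegative, and which contains the monomial
`1296 w⁴` (`wallachNumerator_eq`). Since `w > 0`, it is positive.
-/

noncomputable section

/-! ### Clearing denominators -/

/-- The numerator of `-Q` at the Wallach point of `(k, l, m)`, where `D = k + l + m - 2` and
`e₂`, `e₃` are the second and third elementary symmetric functions of `k, l, m`. -/
def wallachNumerator (D e₂ e₃ : ℝ) : ℝ :=
  -(4 * D ^ 2 + e₃) * (4 * D ^ 4 * (D + 1) * (D ^ 2 + 4 * D + 8) + 15 * e₃ * D ^ 4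
      - 12 * e₃ ^ 2 * D ^ 2 - 4 * e₃ ^ 3)
    + 2 * (D + 2) * (4 * D ^ 2 + e₃) * (D ^ 2 - 2 * e₃) * (5 * D ^ 2 + 2 * e₃) * e₂
    + (D + 2) ^ 2 * (13 * D ^ 4 + 20 * e₃ * D ^ 2 + 4 * e₃ ^ 2) * e₂ ^ 2
    - 4 * D ^ 2 * (D ^ 2 - 2 * e₃) * e₂ ^ 3
    - 8 * D ^ 2 * (D + 2) * e₂ ^ 4

lemma Qpoly_eq_neg_wallachNumerator_div {k l m D : ℝ} (hD : D ≠ 0) (hsum : k + l + m = D + 2) :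
    Qpoly (k / (2 * D)) (l / (2 * D)) (m / (2 * D)) =
      -wallachNumerator D (k * l + k * m + l * m) (k * l * m) / D ^ 12 := by
  have h₁ : k / (2 * D) + l / (2 * D) + m / (2 * D) = (D + 2) / (2 * D) := by
    rw [← hsum]; ring
  have h₂ : k / (2 * D) * (l / (2 * D)) + k / (2 * D) * (m / (2 * D)) +
      l / (2 * D) * (m / (2 * D)) = (k * l + k * m + l * m) / (4 * D ^ 2) := by
    field_simp; ring
  have h₃ : k / (2 * D) * (l / (2 * D)) * (m / (2 * D)) = k * l * m / (8 * D ^ 3) := by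
    field_simp; ring
  simp only [Qpoly, h₁, h₂, h₃, wallachNumerator]
  generalize k * l + k * m + l * m = e₂
  generalize k * l * m = e₃
  field_simp
  ring

/-! ### The numerator as a polynomial in the slack -/

/-- `slackCoeff₀`, …, `slackCoeff₅` are the coefficients of `w ^ 0`, …, `w ^ 5` in the expansion of
`wallachNumerator` given by `wallachNumerator_eq`, where the meaning of `n, y, z, g, w` is
explained; the coefficient of `w ^ 6` is `256`. Each is a polynomial in `n, y, z, g`, at most linear
in `n` and in `y`, with nonnegative coefficients. -/
def slackCoeff₀ (n y z g : ℝ) : ℝ :=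
  (36864 * z * g + 2304 * g ^ 2 + 538624 * y * z * g + 33280 * y * g ^ 2 + 3548672 * z ^ 2 * g +
  1091392 * z * g ^ 2 + 51200 * g ^ 3 + 1472384 * y * z ^ 2 * g + 435424 * y * z * g ^ 2 +
  17984 * y * g ^ 3 + 736912 * z ^ 3 * g + 378196 * z ^ 2 * g ^ 2 + 54576 * z * g ^ 3 +
  1520 * g ^ 4 + 26432 * y * z ^ 3 * g + 11196 * y * z ^ 2 * g ^ 2 + 1224 * y * z * g ^ 3 +
  16 * y * g ^ 4 + 752 * z ^ 4 * g + 336 * z ^ 3 * g ^ 2 + 37 * z ^ 2 * g ^ 3)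
    + n * (147456 * z * g + 9216 * g ^ 2 + 594944 * y * z * g + 35840 * y * g ^ 2 +
    1886720 * z ^ 2 * g + 571840 * z * g ^ 2 + 25472 * g ^ 3 + 427072 * y * z ^ 2 * g +
    121088 * y * z * g ^ 2 + 4480 * y * g ^ 3 + 116768 * z ^ 3 * g + 55976 * z ^ 2 * g ^ 2 +
    7344 * z * g ^ 3 + 160 * g ^ 4 + 2024 * y * z ^ 3 * g + 676 * y * z ^ 2 * g ^ 2 +
    48 * y * z * g ^ 3 + 16 * z ^ 4 * g + 4 * z ^ 3 * g ^ 2)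

lemma slackCoeff₀_nonneg {n y z g : ℝ} (hn : 0 ≤ n) (hy : 0 ≤ y) (hz : 0 ≤ z)
    (hg : 0 ≤ g) : 0 ≤ slackCoeff₀ n y z g := by
  unfold slackCoeff₀
  positivity

/-- The coefficient of `w ^ 1`. -/
def slackCoeff₁ (n y z g : ℝ) : ℝ :=
  (98304 * y * z + 10752 * y * g + 4882432 * z ^ 2 + 1985024 * z * g + 146176 * g ^ 2 +
  7186432 * y * z ^ 2 + 3093728 * y * z * g + 210880 * y * g ^ 2 + 11354112 * z ^ 3 +
  7543424 * z ^ 2 * g + 1448992 * z * g ^ 2 + 68672 * g ^ 3 + 1474176 * y * z ^ 3 +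
  868692 * y * z ^ 2 * g + 144216 * y * z * g ^ 2 + 5264 * y * g ^ 3 + 252032 * z ^ 4 +
  171776 * z ^ 3 * g + 38886 * z ^ 2 * g ^ 2 + 3120 * z * g ^ 3 + 48 * g ^ 4 + 2904 * y * z ^ 4 +
  1192 * y * z ^ 3 * g + 116 * y * z ^ 2 * g ^ 2 + 16 * z ^ 5 + 4 * z ^ 4 * g)
    + n * (360448 * y * z + 39424 * y * g + 5062656 * z ^ 2 + 1989888 * z * g + 143616 * g ^ 2 +
    3694592 * y * z ^ 2 + 1465472 * y * z * g + 94848 * y * g ^ 2 + 3311616 * z ^ 3 +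
    1997792 * z ^ 2 * g + 352480 * z * g ^ 2 + 15232 * g ^ 3 + 249216 * y * z ^ 3 +
    122924 * y * z ^ 2 * g + 16848 * y * z * g ^ 2 + 480 * y * g ^ 3 + 23104 * z ^ 4 +
    12484 * z ^ 3 * g + 2060 * z ^ 2 * g ^ 2 + 96 * z * g ^ 3 + 112 * y * z ^ 4 +
    24 * y * z ^ 3 * g)

lemma slackCoeff₁_nonneg {n y z g : ℝ} (hn : 0 ≤ n) (hy : 0 ≤ y) (hz : 0 ≤ z)
    (hg : 0 ≤ g) : 0 ≤ slackCoeff₁ n y z g := by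
  unfold slackCoeff₁
  positivity

/-- The coefficient of `w ^ 2`. -/
def slackCoeff₂ (n y z g : ℝ) : ℝ :=
  (110592 * z + 17280 * g + 1677312 * y * z + 233856 * y * g + 10416640 * z ^ 2 + 3967664 * z * g
  + 324928 * g ^ 2 + 3905664 * y * z ^ 2 + 1387544 * y * z * g + 98096 * y * g ^ 2 +
  1736112 * z ^ 3 + 937749 * z ^ 2 * g + 152304 * z * g ^ 2 + 6624 * g ^ 3 + 55088 * y * z ^ 3 +
  22204 * y * z ^ 2 * g + 2376 * y * z * g ^ 2 + 48 * y * g ^ 3 + 1392 * z ^ 4 + 552 * z ^ 3 * g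
  + 52 * z ^ 2 * g ^ 2)
    + n * (368640 * z + 57600 * g + 1496064 * y * z + 205824 * y * g + 4358656 * z ^ 2 +
    1610864 * z * g + 128032 * g ^ 2 + 861888 * y * z ^ 2 + 282192 * y * z * g +
    18432 * y * g ^ 2 + 196416 * z ^ 3 + 95220 * z ^ 2 * g + 13488 * z * g ^ 2 + 480 * g ^ 3 +
    2528 * y * z ^ 3 + 760 * y * z ^ 2 * g + 48 * y * z * g ^ 2)

lemma slackCoeff₂_nonneg {n y z g : ℝ} (hn : 0 ≤ n) (hy : 0 ≤ y) (hz : 0 ≤ z)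
    (hg : 0 ≤ g) : 0 ≤ slackCoeff₂ n y z g := by
  unfold slackCoeff₂
  positivity

/-- The coefficient of `w ^ 3`. -/
def slackCoeff₃ (n y z g : ℝ) : ℝ :=
  (10368 * y + 838272 * z + 162624 * g + 1400776 * y * z + 229168 * y * g + 1931280 * z ^ 2 +
  734864 * z * g + 63728 * g ^ 2 + 166296 * y * z ^ 2 + 52712 * y * z * g + 3536 * y * g ^ 2 +
  11888 * z ^ 3 + 5108 * z ^ 2 * g + 608 * z * g ^ 2 + 16 * g ^ 3)
    + n * (31104 * y + 625728 * z + 123456 * g + 450480 * y * z + 74144 * y * g + 287616 * z ^ 2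
    + 107008 * z * g + 9088 * g ^ 2 + 9456 * y * z ^ 2 + 2704 * y * z * g + 160 * y * g ^ 2)

lemma slackCoeff₃_nonneg {n y z g : ℝ} (hn : 0 ≤ n) (hy : 0 ≤ y) (hz : 0 ≤ z)
    (hg : 0 ≤ g) : 0 ≤ slackCoeff₃ n y z g := by
  unfold slackCoeff₃
  positivity

/-- The coefficient of `w ^ 4`. -/
def slackCoeff₄ (n y z g : ℝ) : ℝ :=
  (1296 + 44928 * y + 339232 * z + 72352 * g + 100512 * y * z + 17984 * y * g + 20624 * z ^ 2 +
  7648 * z * g + 656 * g ^ 2)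
    + n * (3456 + 26880 * y + 75392 * z + 16512 * g + 7616 * y * z + 1408 * y * g)

lemma slackCoeff₄_pos {n y z g : ℝ} (hn : 0 ≤ n) (hy : 0 ≤ y) (hz : 0 ≤ z)
    (hg : 0 ≤ g) : 0 < slackCoeff₄ n y z g := by
  unfold slackCoeff₄
  positivity

/-- The coefficient of `w ^ 5`. -/
def slackCoeff₅ (n y z g : ℝ) : ℝ :=
  (3456 + 8704 * y + 7296 * z + 1664 * g)
    + n * (1536 + 1024 * y)

lemma slackCoeff₅_nonneg {n y z g : ℝ} (hn : 0 ≤ n) (hy : 0 ≤ y) (hz : 0 ≤ z)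
    (hg : 0 ≤ g) : 0 ≤ slackCoeff₅ n y z g := by
  unfold slackCoeff₅
  positivity

set_option maxHeartbeats 4000000 in
/-- The polynomial identity behind the inequality, in the coordinates `n = m - 2`,
`y = (k - m) + (l - m)`, `z = (k - m)(l - m)`: the powers of `n` above the first are replaced by
means of the slack `w = n² - 2y`, and the powers of `y` above the first by means of
`g = y² - 4z = (k - l)²`. -/
lemma wallachNumerator_eq {n y z g w : ℝ} (hg : g = y ^ 2 - 4 * z) (hw : w = n ^ 2 - 2 * y) :
    wallachNumerator (3 * n + 4 + y)
      (3 * (n + 2) ^ 2 + 2 * (n + 2) * y + z) ((n + 2) * ((n + 2) ^ 2 + (n + 2) * y + z)) =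
    slackCoeff₀ n y z g + slackCoeff₁ n y z g * w + slackCoeff₂ n y z g * w ^ 2
      + slackCoeff₃ n y z g * w ^ 3 + slackCoeff₄ n y z g * w ^ 4 + slackCoeff₅ n y z g * w ^ 5
      + 256 * w ^ 6 := by
  subst hg hw
  unfold wallachNumerator slackCoeff₀ slackCoeff₁ slackCoeff₂ slackCoeff₃ slackCoeff₄ slackCoeff₅
  ring

lemma wallachNumerator_pos {n y z : ℝ} (hn : 0 ≤ n) (hy : 0 ≤ y) (hz : 0 ≤ z)
    (hg : 0 ≤ y ^ 2 - 4 * z) (hw : 0 < n ^ 2 - 2 * y) :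
    0 < wallachNumerator (3 * n + 4 + y)
      (3 * (n + 2) ^ 2 + 2 * (n + 2) * y + z) ((n + 2) * ((n + 2) ^ 2 + (n + 2) * y + z)) := by
  rw [wallachNumerator_eq rfl rfl]
  have h₀ := slackCoeff₀_nonneg hn hy hz hg
  have h₁ := slackCoeff₁_nonneg hn hy hz hg
  have h₂ := slackCoeff₂_nonneg hn hy hz hg
  have h₃ := slackCoeff₃_nonneg hn hy hz hg
  have h₄ := slackCoeff₄_pos hn hy hz hg
  have h₅ := slackCoeff₅_nonneg hn hy hz hg
  generalize y ^ 2 - 4 * z = g at *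
  generalize n ^ 2 - 2 * y = w at *
  positivity

/-! ### The sign of `Q` -/

lemma Qpoly_wallach_neg {k l m : ℝ} (hkl : l ≤ k) (hlm : m ≤ l) (hm : 2 < m)
    (hslack : 2 * k + 2 * l - 4 < m ^ 2) :
    Qpoly (k / (2 * (k + l + m - 2))) (l / (2 * (k + l + m - 2)))
      (m / (2 * (k + l + m - 2))) < 0 := by
  have hD : 0 < k + l + m - 2 := by linarith
  rw [Qpoly_eq_neg_wallachNumerator_div hD.ne' (by ring), neg_div, neg_lt_zero]
  refine div_pos ?_ (by positivity)
  have h := wallachNumerator_pos (n := m - 2) (y := (k - m) + (l - m)) (z := (k - m) * (l - m))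
    (by linarith) (by linarith) (mul_nonneg (by linarith) (by linarith))
    (by nlinarith [sq_nonneg (k - l)]) (by linarith)
  refine lt_of_lt_of_eq h ?_
  congr 1 <;> ring

/-- The open triangle cut out of the positive octant by the plane `s₁ = 1/2`. -/
def triangle : Set (ℝ × ℝ × ℝ) :=
  {p | 0 < p.1 ∧ 0 < p.2.1 ∧ 0 < p.2.2 ∧ p.1 + p.2.1 + p.2.2 = 1 / 2}

lemma convex_triangle : Convex ℝ triangle := by
  rintro ⟨x, y, z⟩ ⟨hx, hy, hz, hs⟩ ⟨x', y', z'⟩ ⟨hx', hy', hz', hs'⟩ a b ha hb hab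
  simp only at hx hy hz hs hx' hy' hz' hs'
  have pos : ∀ s t : ℝ, 0 < s → 0 < t → 0 < a * s + b * t := fun s t hs ht =>
    convex_Ioi (0 : ℝ) hs ht ha hb hab
  refine ⟨pos x x' hx hx', pos y y' hy hy', pos z z' hz hz', ?_⟩
  simp only [Prod.smul_mk, Prod.mk_add_mk, smul_eq_mul]
  linear_combination a * hs + b * hs' + (1 / 2) * hab

lemma Qpoly_neg_of_mem_triangle {x y z : ℝ} (hx : 0 < x) (hy : 0 < y) (hz : 0 < z)
    (hs : x + y + z = 1 / 2) : Qpoly x y z < 0 := by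
  have hQ : Qpoly x y z =
      -4096 * (x * y * z) ^ 2 * (2 * (x * y * z) - (x * y + x * z + y * z)) ^ 2 := by
    simp only [Qpoly, hs]
    ring
  -- Since `z < 1/2`, already `x * y` exceeds `2 * (x * y * z)`.
  have h : 2 * (x * y * z) - (x * y + x * z + y * z) < 0 := by
    nlinarith [mul_pos (mul_pos hx hy) (show 0 < 1 / 2 - z by linarith), mul_pos hx hz,
      mul_pos hy hz]
  have h' := pow_pos (neg_pos.2 h) 2
  rw [neg_sq] at h'
  have h'' : 0 < (x * y * z) ^ 2 := by positivity
  rw [hQ]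
  nlinarith [mul_pos h'' h']

/-! ### The connecting path -/

/-- The point on the ray through `(k, l, m)` that, for `u ≠ 0`, is the Wallach point of
`(k/u, l/u, m/u)`. It lies on the plane `s₁ = 1/2` for `u = 0`, and it is the Wallach point of
`(k, l, m)` for `u = 1`. -/
def rayPoint (k l m u : ℝ) : ℝ × ℝ × ℝ :=
  (k / (2 * (k + l + m - 2 * u)), l / (2 * (k + l + m - 2 * u)), m / (2 * (k + l + m - 2 * u)))

lemma Qpoly_rayPoint_neg {k l m u : ℝ} (hkl : l ≤ k) (hlm : m ≤ l) (hm : 2 < m)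
    (hslack : 2 * k + 2 * l - 4 < m ^ 2) (hu₀ : 0 < u) (hu₁ : u ≤ 1) :
    Qpoly (rayPoint k l m u).1 (rayPoint k l m u).2.1 (rayPoint k l m u).2.2 < 0 := by
  have hscale : ∀ x : ℝ, x / (2 * (k + l + m - 2 * u)) =
      x / u / (2 * (k / u + l / u + m / u - 2)) := by
    intro x
    have h₁ : k + l + m - 2 * u ≠ 0 := by linarith
    have h₂ : k / u + l / u + m / u - 2 = (k + l + m - 2 * u) / u := by
      field_simp
    rw [h₂]
    field_simp
  simp only [rayPoint, hscale]
  refine Qpoly_wallach_neg (by gcongr) (by gcongr) ?_ ?_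
  · rw [lt_div_iff₀ hu₀]; nlinarith
  · have h : 2 * (k / u) + 2 * (l / u) - 4 = (2 * (k + l) * u - 4 * u ^ 2) / u ^ 2 := by
      field_simp
    rw [h, div_pow]
    gcongr
    -- `u ↦ 2(k + l)u - 4u²` is increasing on `[0, 1]` because `k + l ≥ 4`.
    nlinarith [mul_nonneg (sub_nonneg.2 hu₁) (show 0 ≤ 2 * (k + l) - 4 * (1 + u) by linarith)]

theorem stmt10 (k l m : ℕ) (hkl : l ≤ k) (hlm : m ≤ l) (hm : 1 ≤ m) (hl : 2 ≤ l)
    (hsqrt : Real.sqrt (2 * (k : ℝ) + 2 * l - 4) < (m : ℝ)) :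
    aPoint k l m ∈ O₁ := by
  have hkl' : (l : ℝ) ≤ k := by exact_mod_cast hkl
  have hlm' : (m : ℝ) ≤ l := by exact_mod_cast hlm
  have hl' : (2 : ℝ) ≤ l := by exact_mod_cast hl
  have hm₀ : (0 : ℝ) ≤ m := m.cast_nonneg
  have hslack : 2 * (k : ℝ) + 2 * l - 4 < (m : ℝ) ^ 2 :=
    (Real.sqrt_lt (by linarith) hm₀).1 hsqrt
  -- Indeed `m ^ 2 > 2k + 2l - 4 ≥ 4`.
  have hm' : (2 : ℝ) < m := by nlinarith
  set T : Set (ℝ × ℝ × ℝ) := rayPoint k l m '' Set.Icc 0 1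
  have h₀ : rayPoint k l m 0 ∈ triangle := by
    refine ⟨?_, ?_, ?_, ?_⟩ <;> simp only [rayPoint, mul_zero, sub_zero]
    iterate 3 apply div_pos <;> linarith
    field_simp
  have hTconn : IsPreconnected T := by
    refine isPreconnected_Icc.image _ ?_
    unfold rayPoint
    have hne : ∀ u ∈ Set.Icc (0 : ℝ) 1, 2 * ((k : ℝ) + l + m - 2 * u) ≠ 0 := by
      rintro u ⟨-, hu⟩
      linarith
    fun_prop (disch := assumption)
  have hconn : IsPreconnected (T ∪ triangle) :=
    hTconn.union _ ⟨0, by simp, rfl⟩ h₀ convex_triangle.isPreconnected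
  have htri : triangle ⊆ cube \ OmegaSet := by
    rintro ⟨x, y, z⟩ ⟨hx, hy, hz, hs⟩
    simp only at hx hy hz hs
    refine ⟨⟨⟨hx, ?_⟩, ⟨hy, ?_⟩, ⟨hz, ?_⟩⟩, (Qpoly_neg_of_mem_triangle hx hy hz hs).ne⟩ <;>
      simp only <;> linarith
  have hT : T ⊆ cube \ OmegaSet := by
    rintro _ ⟨u, ⟨hu₀, hu₁⟩, rfl⟩
    rcases hu₀.eq_or_lt with rfl | hu₀
    · exact htri h₀
    · refine ⟨?_, (Qpoly_rayPoint_neg hkl' hlm' hm' hslack hu₀ hu₁).ne⟩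
      have hD : 0 < 2 * ((k : ℝ) + l + m - 2 * u) := by linarith
      refine ⟨⟨?_, ?_⟩, ⟨?_, ?_⟩, ⟨?_, ?_⟩⟩ <;> simp only [rayPoint]
      all_goals first
        | exact div_pos (by linarith) hD
        | rw [div_lt_iff₀ hD]; linarith
  have hcenter : ((1 / 6, 1 / 6, 1 / 6) : ℝ × ℝ × ℝ) ∈ T ∪ triangle := by
    right
    refine ⟨?_, ?_, ?_, ?_⟩ <;> norm_num
  refine hconn.subset_connectedComponentIn hcenter (Set.union_subset hT htri) (Or.inl ⟨1, ?_, ?_⟩)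
  · simp
  · simp [rayPoint, aPoint]
end
end

section
/- Let k ≥ l ≥ m ≥ 1 be integers with l ≥ 2, set h₀ = (k+l+m)/(2(k+l+m−2)) and a₃ = m/(2(k+l+m−2)). Then the two conditions 'l = m' and '16a₃³ − 16h₀a₃² + 2h₀ − 1 = 0' hold simultaneously if and only if k = l = m = 2. (Equivalently, the point (a₁,a₂,a₃) associated to SO(k+l+m)/SO(k)×SO(l)×SO(m) is a vertex (h₀−2x̃(h₀), x̃(h₀), x̃(h₀)) of the curvilinear triangle I(h₀) if and only if k = l = m = 2.) -/
noncomputable section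

/-!
With `l = m`, clearing the denominator `2 (k + 2m - 2)` turns the cubic condition into the
Diophantine equation `(k + 2m - 2)² = m² (k + m)`. Put `t = k - (m - 2)²`; the equation becomes
`((m - 2)² + t) t = m (m - 2)² + 4m - 4`. Both `k` and the right side are positive, so `t > 0`, and
the left side is increasing in `t ≥ 0`;
it is smaller than the right side by `2m - 1` at `t = m - 1`, and larger by `(m - 2)²` at `t = m`.
Hence `m - 1 < t ≤ m`, so `t = m` by integrality, and then `(m - 2)² = 0`.
-/

lemma eq_two_of_sq_eq (k m : ℤ) (hk : 0 < k) (hm : 2 ≤ m)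
    (h : (k + 2 * m - 2) ^ 2 = m ^ 2 * (k + m)) : k = 2 ∧ m = 2 := by
  obtain ⟨t, rfl⟩ : ∃ t, k = (m - 2) ^ 2 + t := ⟨k - (m - 2) ^ 2, by ring⟩
  have ht : ((m - 2) ^ 2 + t) * t = m * (m - 2) ^ 2 + 4 * m - 4 := by linear_combination h
  have lower : m ≤ t := by
    by_contra! hlt
    have h1 : t ≤ m - 1 := by omega
    have h2 := mul_le_mul_of_nonneg_left h1 hk.le
    have h3 := mul_le_mul_of_nonneg_right h1 (by omega : 0 ≤ m - 1)
    nlinarith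
  have hm2 : m = 2 := by
    have h2 := mul_le_mul_of_nonneg_left lower hk.le
    have h3 := mul_le_mul_of_nonneg_right lower (by omega : 0 ≤ m)
    have h4 : (m - 2) ^ 2 = 0 := le_antisymm (by nlinarith) (sq_nonneg _)
    have := pow_eq_zero_iff (two_ne_zero) |>.mp h4
    omega
  subst hm2
  refine ⟨?_, rfl⟩
  norm_num at ht ⊢
  nlinarith

theorem stmt12 (k l m : ℕ) (hkl : l ≤ k) (hlm : m ≤ l) (hm : 1 ≤ m) (hl : 2 ≤ l) :
    (l = m ∧
      16 * ((m : ℝ) / (2 * ((k : ℝ) + l + m - 2))) ^ 3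
        - 16 * (((k : ℝ) + l + m) / (2 * ((k : ℝ) + l + m - 2)))
          * ((m : ℝ) / (2 * ((k : ℝ) + l + m - 2))) ^ 2
        + 2 * (((k : ℝ) + l + m) / (2 * ((k : ℝ) + l + m - 2))) - 1 = 0) ↔
    (k = 2 ∧ l = 2 ∧ m = 2) := by
  constructor
  · rintro ⟨rfl, h⟩
    have hl' : (2 : ℝ) ≤ l := by exact_mod_cast hl
    have hk' : (l : ℝ) ≤ k := by exact_mod_cast hkl
    have hD : (k : ℝ) + l + l - 2 ≠ 0 := by linarith
    have hR : ((k : ℝ) + 2 * l - 2) ^ 2 = l ^ 2 * (k + l) := by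
      field_simp at h
      linear_combination h / 16
    have hZ : ((k : ℤ) + 2 * l - 2) ^ 2 = l ^ 2 * (k + l) := by exact_mod_cast hR
    obtain ⟨h1, h2⟩ := eq_two_of_sq_eq k l (by omega) (by omega) hZ
    omega
  · rintro ⟨rfl, rfl, rfl⟩
    norm_num
end
end

section
/- Let k ≥ l ≥ m ≥ 1 be integers with l ≥ 2. If m < (1+√(k+l))·(k+l−2)/(k+l−1), then the point (a₁,a₂,a₃) = (k/(2(k+l+m−2)), l/(2(k+l+m−2)), m/(2(k+l+m−2))) lies in O₃. -/
/-!
The polynomial `Q` is minus the discriminant of a binary cubic `A p³ + B p² q + C p q² + D q³`, up to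
a positive factor. Here `A = (a₁ + a₂)² (a₂ - a₁)`, `D = (a₁ + a₃)² (a₃ - a₁)`, `B` is the value of
`cubB` at `N = 1/2` and `C` is `B` with `a₂` and `a₃` exchanged. Equivalently, `Q` is a positive multiple of
the discriminant of the quadratic Hessian covariant of the cubic (`Qpoly_eq`). By the
syzygy between the covariants of a binary cubic (`hessian_syzygy`), `Q > 0` as soon as this Hessian
takes a negative value in one direction.

For `a₁ ≥ a₂ ≥ a₃` an explicit direction `(p, q) = (dirY, -dirX - dirY)` works on the region
`a₃ > 0`, `a₁ + a₃ ≤ 1/2`, `2 (a₁ + a₂) (1 - 8 a₃²) + 2 a₃ - 1 > 0`: after substituting nonnegative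
increments for the ordered variables, minus the Hessian is a polynomial with nonnegative
coefficients (`negHess_lower_small`), or a polynomial with nonnegative coefficients plus the
product of another one with the last constraint (`negHess_lower_large`).

That region, without the ordering of `a₁` and `a₂`, is the set `regionD`. It is convex: its only
nonlinear constraint says that `2 (a₁ + a₂)` exceeds a convex function of `a₃`. It lies in the cube
minus `Ω`, and so does its image `regionD'` under a permutation of the coordinates. The base point
`(1/6, 1/4, 1/3)` is in `regionD'`, the point `(1/6, 1/3, 1/6)` is in both sets, and the bound on
`m` implies `m √(k + l) < k + l + m - 2`, which places the Wallach point in `regionD`. Hence the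
connected set `regionD ∪ regionD'` joins the two points.
-/

noncomputable section

/-! ### `Q` as a discriminant -/

/-- Leading coefficient of the binary cubic attached to `(a, b, c)`.
With `b` replaced by `c` it is the coefficient of `q³`. -/
def cubA (a b : ℝ) : ℝ := (a + b) ^ 2 * (b - a)

/-- Coefficient of `p² q` of the binary cubic attached to `(a, b, c)`. With `b`
and `c` exchanged it is the coefficient of `p q²`. The parameter `N` makes the coefficient
homogeneous; the value relevant to `Q` is `N = 1/2`. -/
def cubB (a b c N : ℝ) : ℝ :=
  -3 * a ^ 3 - 2 * a ^ 2 * b - a ^ 2 * c + a * b ^ 2 - 2 * a * b * c - b ^ 2 * c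
    + 2 * N ^ 2 * (a + b + c - N)

/-- Coefficient of `p²` in the Hessian covariant of the cubic. -/
def hessR (a b c N : ℝ) : ℝ := cubB a b c N ^ 2 - 3 * cubA a b * cubB a c b N

/-- Coefficient of `p q` in the Hessian covariant of the cubic. -/
def hessP (a b c N : ℝ) : ℝ := cubB a b c N * cubB a c b N - 9 * cubA a b * cubA a c

/-- Coefficient of `q²` in the Hessian covariant of the cubic. -/
def hessS (a b c N : ℝ) : ℝ := cubB a c b N ^ 2 - 3 * cubB a b c N * cubA a c

/-- The Hessian covariant, a binary quadratic form in `(p, q)`. -/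
def hess (a b c N p q : ℝ) : ℝ :=
  hessR a b c N * p ^ 2 + hessP a b c N * p * q + hessS a b c N * q ^ 2

theorem Qpoly_eq (a b c : ℝ) :
    Qpoly a b c = 256 / 3 *
      (hessP a b c (1 / 2) ^ 2 - 4 * hessR a b c (1 / 2) * hessS a b c (1 / 2)) := by
  simp only [Qpoly]
  unfold hessP hessR hessS cubA cubB
  ring

/-- The classical relation `J² + 27 Δ F² = 4 H³` between a binary cubic `F`, its Hessian `H`, its
cubic covariant `J` and its discriminant `Δ`; minus `3 Δ` is the discriminant of `H`. -/
theorem hessian_syzygy (A B C D p q : ℝ) :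
    ((-27 * A ^ 2 * D + 9 * A * B * C - 2 * B ^ 3) * p ^ 3
        + (-27 * A * B * D + 18 * A * C ^ 2 - 3 * B ^ 2 * C) * p ^ 2 * q
        + (27 * A * C * D - 18 * B ^ 2 * D + 3 * B * C ^ 2) * p * q ^ 2
        + (27 * A * D ^ 2 - 9 * B * C * D + 2 * C ^ 3) * q ^ 3) ^ 2
      - 9 * ((B * C - 9 * A * D) ^ 2 - 4 * (B ^ 2 - 3 * A * C) * (C ^ 2 - 3 * B * D))
        * (A * p ^ 3 + B * p ^ 2 * q + C * p * q ^ 2 + D * q ^ 3) ^ 2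
      = 4 * ((B ^ 2 - 3 * A * C) * p ^ 2 + (B * C - 9 * A * D) * p * q
        + (C ^ 2 - 3 * B * D) * q ^ 2) ^ 3 := by
  ring

theorem Qpoly_pos_of_hess_neg {a b c p q : ℝ} (h : hess a b c (1 / 2) p q < 0) :
    0 < Qpoly a b c := by
  have syz := hessian_syzygy (cubA a b) (cubB a b c (1 / 2)) (cubB a c b (1 / 2)) (cubA a c) p q
  have h3 : hess a b c (1 / 2) p q ^ 3 < 0 := Odd.pow_neg (by decide) h
  rw [Qpoly_eq]
  unfold hess hessR hessP hessS at h3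
  unfold hessR hessP hessS
  have hpos : 0 < (cubB a b c (1 / 2) * cubB a c b (1 / 2) - 9 * cubA a b * cubA a c) ^ 2
      - 4 * (cubB a b c (1 / 2) ^ 2 - 3 * cubA a b * cubB a c b (1 / 2))
        * (cubB a c b (1 / 2) ^ 2 - 3 * cubB a b c (1 / 2) * cubA a c) := by
    refine pos_of_mul_pos_left ?_ (sq_nonneg (cubA a b * p ^ 3 + cubB a b c (1 / 2) * p ^ 2 * q
      + cubB a c b (1 / 2) * p * q ^ 2 + cubA a c * q ^ 3))
    have hJ := sq_nonneg ((-27 * cubA a b ^ 2 * cubA a c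
        + 9 * cubA a b * cubB a b c (1 / 2) * cubB a c b (1 / 2) - 2 * cubB a b c (1 / 2) ^ 3) * p ^ 3
      + (-27 * cubA a b * cubB a b c (1 / 2) * cubA a c + 18 * cubA a b * cubB a c b (1 / 2) ^ 2
        - 3 * cubB a b c (1 / 2) ^ 2 * cubB a c b (1 / 2)) * p ^ 2 * q
      + (27 * cubA a b * cubB a c b (1 / 2) * cubA a c - 18 * cubB a b c (1 / 2) ^ 2 * cubA a c
        + 3 * cubB a b c (1 / 2) * cubB a c b (1 / 2) ^ 2) * p * q ^ 2
      + (27 * cubA a b * cubA a c ^ 2 - 9 * cubB a b c (1 / 2) * cubB a c b (1 / 2) * cubA a c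
        + 2 * cubB a c b (1 / 2) ^ 3) * q ^ 3)
    linarith
  linarith

/-! ### A direction in which the Hessian is negative -/

/-- Auxiliary form: the chosen direction is `(p, q) = (dirY, -dirX - dirY)`. -/
def dirX (a b c N : ℝ) : ℝ := b ^ 2 + N * (a + b + c - N)

/-- First coordinate of the chosen direction. -/
def dirY (a b c N : ℝ) : ℝ := a * b + N * (a + b + c - N)

/-- Minus the Hessian in the direction `(dirY, -dirX - dirY)`; homogeneous of degree `10` in
`(a, b, c, N)`. -/
def negHess (a b c N : ℝ) : ℝ :=
  -hess a b c N (dirY a b c N) (-dirX a b c N - dirY a b c N)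

set_option maxHeartbeats 4000000 in
set_option maxRecDepth 100000 in
/-- The case `c ≤ e` of the positivity of `negHess`, where `e = a + b + c - N`, in the increments
`m = c`, `d = e - c`, `t = b - e`, `s = a - b`. The expansion has nonnegative coefficients; the
subtracted terms are part of it and give strictness unless `d = t = s = 0`. -/
theorem negHess_lower_small (m d t s : ℝ) (hm : 0 < m) (hd : 0 ≤ d) (ht : 0 ≤ t) (hs : 0 ≤ s) :
    0 ≤ negHess (m + d + t + s) (m + d + t) m (2 * m + d + 2 * t + s)
      - 1296 * m ^ 8 * (d + t) ^ 2 - 72 * m ^ 7 * s ^ 3 := by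
  unfold negHess hess hessR hessP hessS cubA cubB dirX dirY
  ring_nf
  positivity

/-- The quotient of `negHess` by the constraint polynomial on the face `b = c`, where the division
is exact, in the increments `d = c - e`, `s = a - b`. -/
def certU (d s e : ℝ) : ℝ :=
    48 * d ^ 7 + 96 * d ^ 6 * s + 516 * d ^ 6 * e + 64 * d ^ 5 * s ^ 2 + 924 * d ^ 5 * s * e
    + 1848 * d ^ 5 * e ^ 2 + 14 * d ^ 4 * s ^ 3 + 560 * d ^ 4 * s ^ 2 * e
    + 2880 * d ^ 4 * s * e ^ 2 + 2556 * d ^ 4 * e ^ 3 + 128 * d ^ 3 * s ^ 3 * e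
    + 1588 * d ^ 3 * s ^ 2 * e ^ 2 + 3264 * d ^ 3 * s * e ^ 3 + 1512 * d ^ 3 * e ^ 4
    + 8 * d ^ 2 * s ^ 4 * e + 410 * d ^ 2 * s ^ 3 * e ^ 2 + 1440 * d ^ 2 * s ^ 2 * e ^ 3
    + 1476 * d ^ 2 * s * e ^ 4 + 324 * d ^ 2 * e ^ 5 + 64 * d * s ^ 4 * e ^ 2
    + 300 * d * s ^ 3 * e ^ 3 + 456 * d * s ^ 2 * e ^ 4 + 216 * d * s * e ^ 5
    + 6 * s ^ 5 * e ^ 2 + 32 * s ^ 4 * e ^ 3 + 58 * s ^ 3 * e ^ 4 + 36 * s ^ 2 * e ^ 5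

/-- A multiplier of the constraint polynomial, divisible by `t`, for which the remainder in
`negHess_lower_large` has nonnegative coefficients. It is found by linear programming, the
unknowns being its coefficients, and rounded. -/
def certW (d t s e : ℝ) : ℝ :=
    288 * d ^ 6 * t + 4750 * d ^ 5 * t ^ 2 + 500 * d ^ 5 * t * s + 4392 * d ^ 5 * t * e
    + 1120 * d ^ 4 * t ^ 3 + 900 * d ^ 4 * t ^ 2 * s + 400 * d ^ 4 * t * s ^ 2
    + 3000 * d ^ 4 * t * s * e + 5538 * d ^ 4 * t * e ^ 2 + 750 * d ^ 3 * t ^ 4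
    + 1300 * d ^ 3 * t ^ 3 * s + 13600 * d ^ 3 * t ^ 3 * e + 600 * d ^ 3 * t ^ 2 * s ^ 2
    + 11000 * d ^ 3 * t ^ 2 * s * e + 16344 * d ^ 3 * t ^ 2 * e ^ 2 + 46 * d ^ 3 * t * s ^ 3
    + 2000 * d ^ 3 * t * s ^ 2 * e + 9800 * d ^ 3 * t * s * e ^ 2 + 11000 * d ^ 3 * t * e ^ 3
    + 550 * d ^ 2 * t ^ 5 + 1500 * d ^ 2 * t ^ 4 * s + 300 * d ^ 2 * t ^ 3 * s ^ 2
    + 90 * d ^ 2 * t ^ 2 * s ^ 3 + 1500 * d ^ 2 * t ^ 2 * s ^ 2 * e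
    + 340 * d ^ 2 * t * s ^ 3 * e + 2000 * d ^ 2 * t * s ^ 2 * e ^ 2
    + 4000 * d ^ 2 * t * e ^ 4 + 100 * d * t ^ 6 + 300 * d * t ^ 5 * s + 2340 * d * t ^ 5 * e
    + 90 * d * t ^ 4 * s ^ 2 + 4302 * d * t ^ 4 * s * e + 7500 * d * t ^ 4 * e ^ 2
    + 54 * d * t ^ 3 * s ^ 3 + 2461 * d * t ^ 3 * s ^ 2 * e + 10000 * d * t ^ 3 * s * e ^ 2
    + 200 * d * t ^ 2 * s ^ 3 * e + 4000 * d * t ^ 2 * s ^ 2 * e ^ 2 + 6 * d * t * s ^ 4 * e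
    + 720 * d * t * s ^ 3 * e ^ 2 + 500 * d * t * e ^ 5 + 20 * t ^ 7 + 40 * t ^ 6 * s
    + 48 * t ^ 5 * s ^ 2 + 12 * t ^ 4 * s ^ 3 + 6 * t ^ 2 * s ^ 4 * e + 42 * t * s ^ 4 * e ^ 2

set_option maxHeartbeats 4000000 in
set_option maxRecDepth 100000 in
/-- The case `e ≤ c` of the positivity of `negHess`, where `e = a + b + c - N`, in the increments
`d = c - e`, `t = b - c`, `s = a - b`. The first factor of the product is the constraint polynomial
`e N² - 2 c² (a + b)`. -/
theorem negHess_lower_large (d e t s : ℝ) (hd : 0 ≤ d) (he : 0 ≤ e) (ht : 0 ≤ t) (hs : 0 ≤ s) :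
    0 ≤ negHess (d + e + t + s) (d + e + t) (d + e) (3 * d + 2 * e + 2 * t + s)
      - (e * (3 * d + 2 * e + 2 * t + s) ^ 2 - 2 * (d + e) ^ 2 * (2 * d + 2 * e + 2 * t + s))
        * (certU d s e + certW d t s e) := by
  unfold negHess hess hessR hessP hessS cubA cubB dirX dirY certU certW
  ring_nf
  positivity

theorem certUW_pos {d e t s : ℝ} (hd : 0 ≤ d) (he : 0 < e) (ht : 0 ≤ t) (hs : 0 ≤ s)
    (h : 0 < d + t + s) : 0 < certU d s e + certW d t s e := by
  have h1 : 48 * d ^ 7 + 36 * s ^ 2 * e ^ 5 ≤ certU d s e := by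
    rw [← sub_nonneg]
    unfold certU
    ring_nf
    positivity
  have h2 : 20 * t ^ 7 ≤ certW d t s e := by
    rw [← sub_nonneg]
    unfold certW
    ring_nf
    positivity
  have h3 : 0 < 48 * d ^ 7 + 36 * s ^ 2 * e ^ 5 + 20 * t ^ 7 := by
    rcases hd.lt_or_eq with hd' | rfl
    · positivity
    rcases ht.lt_or_eq with ht' | rfl
    · positivity
    have hs' : 0 < s := by linarith
    positivity
  linarith

theorem negHess_pos {a b c N : ℝ} (hc : 0 < c) (hcb : c ≤ b) (hba : b ≤ a)
    (he : 0 < a + b + c - N) (heb : a + c ≤ N)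
    (hC : 0 < (a + b + c - N) * N ^ 2 - 2 * c ^ 2 * (a + b)) : 0 < negHess a b c N := by
  obtain ⟨s, rfl⟩ : ∃ s, a = b + s := ⟨a - b, by ring⟩
  have hs : 0 ≤ s := by linarith
  obtain ⟨e, rfl⟩ : ∃ e, N = b + s + b + c - e := ⟨b + s + b + c - N, by ring⟩
  have he' : 0 < e := by linarith
  rcases le_total c e with hce | hce
  · obtain ⟨d, rfl⟩ : ∃ d, e = c + d := ⟨e - c, by ring⟩
    obtain ⟨t, rfl⟩ : ∃ t, b = c + d + t := ⟨b - (c + d), by ring⟩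
    have hd : 0 ≤ d := by linarith
    have ht : 0 ≤ t := by linarith
    have key := negHess_lower_small c d t s hc hd ht hs
    have hpos : 0 < 1296 * c ^ 8 * (d + t) ^ 2 + 72 * c ^ 7 * s ^ 3 := by
      rcases hd.lt_or_eq with hd' | rfl
      · positivity
      rcases ht.lt_or_eq with ht' | rfl
      · positivity
      rcases hs.lt_or_eq with hs' | rfl
      · positivity
      -- At `d = t = s = 0` the constraint polynomial vanishes.
      exact absurd hC (by ring_nf; norm_num)
    rw [show c + d + t + s + (c + d + t) + c - (c + d) = 2 * c + d + 2 * t + s by ring]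
    linarith
  · obtain ⟨d, rfl⟩ : ∃ d, c = d + e := ⟨c - e, by ring⟩
    obtain ⟨t, rfl⟩ : ∃ t, b = d + e + t := ⟨b - (d + e), by ring⟩
    have hd : 0 ≤ d := by linarith
    have ht : 0 ≤ t := by linarith
    have key := negHess_lower_large d e t s hd he'.le ht hs
    have hdts : 0 < d + t + s := by
      by_contra hcon
      have hd0 : d = 0 := by linarith
      have ht0 : t = 0 := by linarith
      have hs0 : s = 0 := by linarith
      subst hd0 ht0 hs0
      -- At `d = t = s = 0` the constraint polynomial vanishes.
      exact absurd hC (by ring_nf; norm_num)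
    have hC' : 0 < e * (3 * d + 2 * e + 2 * t + s) ^ 2
        - 2 * (d + e) ^ 2 * (2 * d + 2 * e + 2 * t + s) := by
      convert hC using 1
      ring
    have hprod := mul_pos hC' (certUW_pos hd he' ht hs hdts)
    rw [show d + e + t + s + (d + e + t) + (d + e) - e = 3 * d + 2 * e + 2 * t + s by ring]
    linarith

/-! ### A convex region on which `Q` is positive -/

/-- A convex region, contained in `{Q > 0}`, of points whose last coordinate is smallest. -/
def regionD : Set (ℝ × ℝ × ℝ) :=
  {p | 0 < p.2.2 ∧ p.2.2 ≤ p.1 ∧ p.2.2 ≤ p.2.1 ∧ p.1 + p.2.2 ≤ 1 / 2 ∧ p.2.1 + p.2.2 ≤ 1 / 2 ∧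
    0 < 2 * (p.1 + p.2.1) * (1 - 8 * p.2.2 ^ 2) + 2 * p.2.2 - 1}

/-- The analogue of `regionD` for points whose first coordinate is smallest. -/
def regionD' : Set (ℝ × ℝ × ℝ) := {p | (p.2.1, p.2.2, p.1) ∈ regionD}

theorem Qpoly_swap (a b c : ℝ) : Qpoly a b c = Qpoly b a c := by
  simp only [Qpoly]
  ring

theorem Qpoly_rotate (a b c : ℝ) : Qpoly a b c = Qpoly b c a := by
  simp only [Qpoly]
  ring

theorem Qpoly_pos_of_le {a b c : ℝ} (hc : 0 < c) (hcb : c ≤ b) (hba : b ≤ a)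
    (hac : a + c ≤ 1 / 2) (hC : 0 < 2 * (a + b) * (1 - 8 * c ^ 2) + 2 * c - 1) :
    0 < Qpoly a b c := by
  have hpos : 0 < c ^ 2 * (a + b) := mul_pos (pow_pos hc 2) (by linarith)
  have hneg := negHess_pos (N := 1 / 2) hc hcb hba (by linarith) hac (by linarith)
  exact Qpoly_pos_of_hess_neg (neg_pos.mp hneg)

theorem regionD_subset : regionD ⊆ cube \ OmegaSet := by
  rintro ⟨a, b, c⟩ ⟨hc, hca, hcb, hac, hbc, hC⟩
  dsimp only at hc hca hcb hac hbc hC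
  refine ⟨⟨⟨?_, ?_⟩, ⟨?_, ?_⟩, ⟨?_, ?_⟩⟩, ?_⟩
  iterate 6 (dsimp only; linarith)
  have hQ : 0 < Qpoly a b c := by
    rcases le_total b a with hba | hab
    · exact Qpoly_pos_of_le hc hcb hba hac hC
    · rw [Qpoly_swap]
      exact Qpoly_pos_of_le hc hca hab hbc (by linarith)
  exact fun h => hQ.ne' h

theorem regionD'_subset : regionD' ⊆ cube \ OmegaSet := by
  rintro ⟨a, b, c⟩ h
  obtain ⟨⟨hb, hc, ha⟩, hQ⟩ := regionD_subset h
  refine ⟨⟨ha, hb, hc⟩, fun h0 => hQ ?_⟩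
  change Qpoly b c a = 0
  rw [← Qpoly_rotate]
  exact h0

/-- The graph of `v ↦ (1 - 2v) / (1 - 8v²)` on `[0, 1/4]` lies above its tangent at `w`, so a point
`(2u, v)` above the graph lies above the tangent; denominators are cleared. -/
theorem tangent_lt {u v w : ℝ} (hv : 0 < v) (hv' : v ≤ 1 / 4) (hw : 0 < 1 - 8 * w ^ 2)
    (hC : 0 < 2 * u * (1 - 8 * v ^ 2) + 2 * v - 1) :
    (1 - 2 * w) * (1 - 8 * w ^ 2) + (-2 + 16 * w - 16 * w ^ 2) * (v - w)
      < 2 * u * (1 - 8 * w ^ 2) ^ 2 := by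
  have hV : 0 < 1 - 8 * v ^ 2 := by nlinarith
  refine lt_of_mul_lt_mul_left ?_ hV.le
  have h1 : (1 - 2 * v) * (1 - 8 * w ^ 2) ^ 2 < 2 * u * (1 - 8 * v ^ 2) * (1 - 8 * w ^ 2) ^ 2 :=
    mul_lt_mul_of_pos_right (by linarith) (pow_pos hw 2)
  -- An affine function of `v`, positive at `v = 0` and at `v = 1/4`.
  have h2 : 0 ≤ (-2 + 16 * w - 16 * w ^ 2) * v + 1 - 4 * w + 8 * w ^ 2 := by
    have e : (-2 + 16 * w - 16 * w ^ 2) * v + 1 - 4 * w + 8 * w ^ 2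
        = (1 - 4 * v) * (4 * w ^ 2 + (1 - 2 * w) ^ 2) + 4 * v * (1 / 2 + 4 * w ^ 2) := by ring
    have h4 : 0 ≤ 1 - 4 * v := by linarith
    rw [e]
    positivity
  have h3 := mul_nonneg (sq_nonneg (v - w)) h2
  linarith

theorem regionD_convex : Convex ℝ regionD := by
  rintro ⟨a, b, c⟩ ⟨hc, hca, hcb, hac, hbc, hC⟩ ⟨a', b', c'⟩ ⟨hc', hca', hcb', hac', hbc', hC'⟩
    x y hx hy hxy
  dsimp only at hc hca hcb hac hbc hC hc' hca' hcb' hac' hbc' hC'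
  obtain rfl : y = 1 - x := by linarith
  have hw : 0 < x * c + (1 - x) * c' := by
    rcases hx.lt_or_eq with hx' | rfl
    · nlinarith [mul_pos hx' hc, mul_nonneg hy hc'.le]
    · linarith
  refine ⟨?_, ?_, ?_, ?_, ?_, ?_⟩ <;>
    simp only [Prod.smul_mk, Prod.mk_add_mk, smul_eq_mul]
  · exact hw
  · nlinarith
  · nlinarith
  · nlinarith
  · nlinarith
  · have hw4 : x * c + (1 - x) * c' ≤ 1 / 4 := by nlinarith
    set w := x * c + (1 - x) * c' with hwdef
    have hW : 0 < 1 - 8 * w ^ 2 := by nlinarith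
    have t₁ := tangent_lt (w := w) hc (by linarith) hW hC
    have t₂ := tangent_lt (w := w) hc' (by linarith) hW hC'
    have t₃ : (1 - 2 * w) * (1 - 8 * w ^ 2) + (-2 + 16 * w - 16 * w ^ 2) * (w - w)
        < 2 * (x * (a + b) + (1 - x) * (a' + b')) * (1 - 8 * w ^ 2) ^ 2 := by
      rcases hx.lt_or_eq with hx' | rfl
      · have p₁ := mul_lt_mul_of_pos_left t₁ hx'
        have p₂ := mul_le_mul_of_nonneg_left t₂.le hy
        -- `w - w` is the convex combination of `c - w` and `c' - w`.
        rw [show w - w = x * (c - w) + (1 - x) * (c' - w) by rw [hwdef]; ring]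
        linarith
      · have hwc : w = c' := by rw [hwdef]; ring
        rw [← hwc] at t₂
        linarith
    have t₄ : 0 < (1 - 8 * w ^ 2) *
        (2 * (x * (a + b) + (1 - x) * (a' + b')) * (1 - 8 * w ^ 2) + 2 * w - 1) := by
      linarith
    have t₅ := (mul_pos_iff_of_pos_left hW).mp t₄
    linarith

theorem regionD'_convex : Convex ℝ regionD' := by
  rintro ⟨a, b, c⟩ h ⟨a', b', c'⟩ h' x y hx hy hxy
  exact regionD_convex h h' hx hy hxy

/-! ### The Wallach point -/

theorem aPoint_mem_regionD (k l m : ℕ) (hkl : l ≤ k) (hlm : m ≤ l) (hm : 1 ≤ m) (hl : 2 ≤ l)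
    (hlt : (m : ℝ) < (1 + Real.sqrt ((k : ℝ) + l)) * (((k : ℝ) + l - 2) / ((k : ℝ) + l - 1))) :
    aPoint k l m ∈ regionD := by
  have hkl' : (l : ℝ) ≤ k := by exact_mod_cast hkl
  have hlm' : (m : ℝ) ≤ l := by exact_mod_cast hlm
  have hm' : (1 : ℝ) ≤ m := by exact_mod_cast hm
  have hl' : (2 : ℝ) ≤ l := by exact_mod_cast hl
  obtain ⟨N, hN⟩ : ∃ N : ℝ, N = (k : ℝ) + l + m - 2 := ⟨_, rfl⟩
  have hN0 : 0 < N := by linarith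
  obtain ⟨r, hr⟩ : ∃ r : ℝ, r = Real.sqrt ((k : ℝ) + l) := ⟨_, rfl⟩
  have hr2 : r ^ 2 = (k : ℝ) + l := by rw [hr]; exact Real.sq_sqrt (by positivity)
  have hr1 : 1 < r := by
    rw [hr]
    exact Real.lt_sqrt_of_sq_lt (by linarith)
  have hmr : (m : ℝ) * r < N := by
    rw [← hr, ← mul_div_assoc, lt_div_iff₀ (by linarith)] at hlt
    -- Since `k + l - 1 = (r - 1) (r + 1)`, the factor `r + 1` cancels.
    have h1 : (1 + r) * (m * (r - 1)) < (1 + r) * ((k : ℝ) + l - 2) := by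
      calc (1 + r) * (m * (r - 1)) = m * ((k : ℝ) + l - 1) := by rw [← hr2]; ring
        _ < _ := hlt
    have h2 := lt_of_mul_lt_mul_left h1 (by linarith)
    linarith
  have hsq : (m : ℝ) ^ 2 * (k + l) < N ^ 2 := by
    rw [← hr2, ← mul_pow]
    exact pow_lt_pow_left₀ hmr (by positivity) two_ne_zero
  unfold aPoint regionD
  rw [← hN]
  refine ⟨?_, ?_, ?_, ?_, ?_, ?_⟩ <;> dsimp only
  · positivity
  · gcongr
    linarith
  · gcongr
  · rw [← add_div, div_le_div_iff₀ (by positivity) two_pos]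
    linarith
  · rw [← add_div, div_le_div_iff₀ (by positivity) two_pos]
    linarith
  · have h : 2 * ((k : ℝ) / (2 * N) + l / (2 * N)) * (1 - 8 * (m / (2 * N)) ^ 2)
        + 2 * (m / (2 * N)) - 1 = 2 * (N ^ 2 - (m : ℝ) ^ 2 * (k + l)) / N ^ 3 := by
      have hm2 : (m : ℝ) = N + 2 - k - l := by linarith
      field_simp
      rw [hm2]
      ring
    rw [h]
    exact div_pos (by linarith) (by positivity)

theorem stmt13 (k l m : ℕ) (hkl : l ≤ k) (hlm : m ≤ l) (hm : 1 ≤ m) (hl : 2 ≤ l)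
    (hlt : (m : ℝ) < (1 + Real.sqrt ((k : ℝ) + l)) * (((k : ℝ) + l - 2) / ((k : ℝ) + l - 1))) :
    aPoint k l m ∈ O₃ := by
  have hbase : ((1 / 6, 1 / 4, 1 / 3) : ℝ × ℝ × ℝ) ∈ regionD' := by
    refine ⟨?_, ?_, ?_, ?_, ?_, ?_⟩ <;> norm_num
  have hmid : ((1 / 6, 1 / 3, 1 / 6) : ℝ × ℝ × ℝ) ∈ regionD := by
    refine ⟨?_, ?_, ?_, ?_, ?_, ?_⟩ <;> norm_num
  have hmid' : ((1 / 6, 1 / 3, 1 / 6) : ℝ × ℝ × ℝ) ∈ regionD' := by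
    refine ⟨?_, ?_, ?_, ?_, ?_, ?_⟩ <;> norm_num
  have hconn : IsPreconnected (regionD ∪ regionD') :=
    IsPreconnected.union _ hmid hmid' regionD_convex.isPreconnected
      regionD'_convex.isPreconnected
  exact hconn.subset_connectedComponentIn (Or.inr hbase)
    (Set.union_subset regionD_subset regionD'_subset)
    (Or.inl (aPoint_mem_regionD k l m hkl hlm hm hl hlt))
end
end

section
/- Let k ≥ l ≥ m ≥ 1 be integers with l ≥ 2. If m = 1, or if m = 2 and k+l ≥ 5, or if m = 3 and k+l ≥ 7, then the point (a₁,a₂,a₃) = (k/(2(k+l+m−2)), l/(2(k+l+m−2)), m/(2(k+l+m−2))) lies in O₃. -/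
/-!
Write `d = k + l + m - 2`. As `k, l, m` range over the positive reals with `d > 0`, the points
`(k, l, m) / (2 d)` cover the part `s₁ > 1/2` of the cube, and there `Q * d ^ 12` is an explicit polynomial `G k l m`
(`Qpoly_mul_pow`). The component `O₃` lies on the side `Q > 0`, so it suffices to join the given
integer triple to the triple `(4/3, 2, 8/3)` of the base point inside the set `goodSet` where `G > 0`
and the three coordinates stay in `(0, 1/2)`.

* With `m` fixed, the positivity of `G` on the wedges `k ≥ l ≥ 2, m = 1`; `k ≥ l ≥ 3, m = 2`;
  `k ≥ l ≥ 4, m = 3` and on the half-lines `(k, 2, 2)`, `k ≥ 3`; `(k, 3, 3)`, `k ≥ 4` is seen from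
  the expansion at the vertex of the wedge, whose coefficients are almost all nonnegative
  (`G_pos_one`, `G_pos_two`, `G_pos_three`, `G_pos_two_two`, `G_pos_three_three`). Each of these sets
  is convex, so all its points are joined to each other.
* Four segments in the `m`-direction (`G_pos_link_base`, `G_pos_link_32`, `G_pos_link_43`,
  `G_pos_link_54`) connect these sets to one another and to the triple `(8/3, 2, 4/3)`.
* The triple `(8/3, 2, 4/3)` is the base triple with its coordinates reversed. Since `Q` is symmetric,
  permutations of coordinates preserve joinability. The class of `(3, 2, 1)` contains `(2, 2, 1)` and
  `(3, 2, 2)`, which are fixed by the transpositions of the first two and of the last two coordinates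
  respectively; these generate all permutations, so the class is invariant under all of them
  (`joined_base`).
-/

noncomputable section

/-! ### Homogenised parameters -/

/-- The polynomial `Q * d ^ 12` at the point `(k, l, m) / (2 d)`, where `d = k + l + m - 2`. -/
def G (k l m : ℝ) : ℝ :=
  let d := k + l + m - 2
  let e₂ := k * l + k * m + l * m
  let e₃ := k * l * m
  (4 * d ^ 2 + e₃) * (4 * d ^ 4 * (d ^ 3 + 5 * d ^ 2 + 12 * d + 8) + 15 * d ^ 4 * e₃
      - 12 * d ^ 2 * e₃ ^ 2 - 4 * e₃ ^ 3)
    - 2 * (d + 2) * e₂ * (4 * d ^ 2 + e₃) * (d ^ 2 - 2 * e₃) * (5 * d ^ 2 + 2 * e₃)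
    - (d + 2) ^ 2 * e₂ ^ 2 * (13 * d ^ 4 + 20 * d ^ 2 * e₃ + 4 * e₃ ^ 2)
    + 4 * d ^ 2 * (d ^ 2 - 2 * e₃) * e₂ ^ 3
    + 8 * d ^ 2 * (d + 2) * e₂ ^ 4

/-- The map `aPoint`, extended to real parameters. -/
def toCube (k l m : ℝ) : ℝ × ℝ × ℝ :=
  (k / (2 * (k + l + m - 2)), l / (2 * (k + l + m - 2)), m / (2 * (k + l + m - 2)))

/-- The real triples that `toCube` sends into the part `Q > 0` of the cube. The three sum conditions
say that the coordinates of the image are less than `1/2`. -/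
def goodSet : Set (ℝ × ℝ × ℝ) :=
  {p | 0 < p.1 ∧ 0 < p.2.1 ∧ 0 < p.2.2 ∧ 2 < p.1 + p.2.1 ∧ 2 < p.1 + p.2.2 ∧ 2 < p.2.1 + p.2.2 ∧
    0 < G p.1 p.2.1 p.2.2}

lemma Qpoly_mul_pow {k l m : ℝ} (hd : k + l + m - 2 ≠ 0) :
    Qpoly (toCube k l m).1 (toCube k l m).2.1 (toCube k l m).2.2 * (k + l + m - 2) ^ 12 =
      G k l m := by
  simp only [toCube, G]
  -- Passing to elementary symmetric functions keeps the final polynomial identity small.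
  obtain ⟨d, hd'⟩ : ∃ d, d = k + l + m - 2 := ⟨_, rfl⟩
  rw [← hd'] at hd ⊢
  have h₁ : k / (2 * d) + l / (2 * d) + m / (2 * d) = (d + 2) / (2 * d) := by
    rw [hd']; ring
  have h₂ : k / (2 * d) * (l / (2 * d)) + k / (2 * d) * (m / (2 * d)) +
      l / (2 * d) * (m / (2 * d)) = (k * l + k * m + l * m) / (4 * d ^ 2) := by
    field_simp; ring
  have h₃ : k / (2 * d) * (l / (2 * d)) * (m / (2 * d)) = k * l * m / (8 * d ^ 3) := by
    field_simp; ring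
  simp only [Qpoly]
  rw [h₁, h₂, h₃]
  generalize k * l + k * m + l * m = e₂
  generalize k * l * m = e₃
  field_simp
  ring

/-! ### Positivity of `G` on the wedges and on the connecting segments -/

/-- The polynomial is not coefficientwise nonnegative: the negative coefficients of `x ^ 2 * y ^ 8`,
`x ^ 3 * y ^ 7` and `x ^ 4 * y ^ 6` are absorbed by the square `hs` and by the quadratics with
negative discriminant in `h0` and `h1`. The other two wedges are treated in the same way, with a
cubic in place of the quadratics in the last one. -/
lemma G_pos_one {x y : ℝ} (hx : 0 ≤ x) (hy : 0 ≤ y) : 0 < G (2 + x + y) (2 + x) 1 := by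
  have h0 : 0 ≤ x ^ 2 * y ^ 7 * (670 - 102 * x + 343 / 64 * x ^ 2) :=
    mul_nonneg (by positivity) (by nlinarith [sq_nonneg (x - 10), sq_nonneg (x - 1)])
  have h1 : 0 ≤ x ^ 3 * y ^ 6 * (1452 - 149 * x + 80 * x ^ 2) :=
    mul_nonneg (by positivity) (by nlinarith [sq_nonneg (x - 10), sq_nonneg (x - 1)])
  have hr : 0 <
      2592 + 7560 * y + 13707 * y ^ 2 + 22122 * y ^ 3 + 26061 * y ^ 4 + 18972 * y ^ 5 + 8237
        * y ^ 6 + 2082 * y ^ 7 + 283 * y ^ 8 +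
      x * (15120 + 42336 * y + 82236 * y ^ 2 + 117414 * y ^ 3 + 105206 * y ^ 4 + 55580 * y ^
        5 + 16768 * y ^ 6 + 2670 * y ^ 7 + 174 * y ^ 8) +
      x ^ 2 * (42336 + 113976 * y + 214358 * y ^ 2 + 247826 * y ^ 3 + 161299 * y ^ 4 + 57432
        * y ^ 5 + 10292 * y ^ 6) +
      x ^ 3 * (75984 + 193888 * y + 318684 * y ^ 2 + 277774 * y ^ 3 + 121784 * y ^ 4 + 24728
        * y ^ 5) +
      x ^ 4 * (96944 + 230200 * y + 304727 * y ^ 2 + 188580 * y ^ 3 + 50714 * y ^ 4 + 4268 *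
        y ^ 5) +
      x ^ 5 * (92080 + 199008 * y + 202104 * y ^ 2 + 87012 * y ^ 3 + 14744 * y ^ 4 + 892 * y
        ^ 5) +
      x ^ 6 * (66336 + 126672 * y + 97324 * y ^ 2 + 30576 * y ^ 3 + 4236 * y ^ 4 + 336 * y ^
        5) +
      x ^ 7 * (36192 + 58560 * y + 33792 * y ^ 2 + 7888 * y ^ 3 + 768 * y ^ 4) +
      x ^ 8 * (14640 + 18792 * y + 7612 * y ^ 2 + 1032 * y ^ 3) +
      x ^ 9 * (4176 + 3760 * y + 816 * y ^ 2) +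
      x ^ 10 * (752 + 352 * y) +
      x ^ 11 * (64) := by
    positivity
  have hs : 0 ≤ 16 * y ^ 7 * (y - 13 / 32 * x ^ 2) ^ 2 := by positivity
  refine (add_pos_of_pos_of_nonneg hr (add_nonneg hs (add_nonneg h0 h1))).trans_eq ?_
  unfold G
  ring

lemma G_pos_two {x y : ℝ} (hx : 0 ≤ x) (hy : 0 ≤ y) : 0 < G (3 + x + y) (3 + x) 2 := by
  have h0 : 0 ≤ x ^ 2 * y ^ 7 * (202 - 58 * x + 343 / 64 * x ^ 2) :=
    mul_nonneg (by positivity) (by nlinarith [sq_nonneg (x - 5)])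
  have hr : 0 <
      186624 + 583200 * y + 807408 * y ^ 2 + 579528 * y ^ 3 + 300096 * y ^ 4 + 118224 * y ^
        5 + 31475 * y ^ 6 + 5078 * y ^ 7 + 443 * y ^ 8 +
      x * (1166400 + 3203712 * y + 3708720 * y ^ 2 + 2127168 * y ^ 3 + 758208 * y ^ 4 +
        187872 * y ^ 5 + 31340 * y ^ 6 + 3042 * y ^ 7 + 126 * y ^ 8) +
      x ^ 2 * (3203712 + 7648992 * y + 7352640 * y ^ 2 + 3376800 * y ^ 3 + 851840 * y ^ 4 +
        124080 * y ^ 5 + 9570 * y ^ 6) +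
      x ^ 3 * (5099328 + 10450944 * y + 8289600 * y ^ 2 + 3065408 * y ^ 3 + 573312 * y ^ 4 +
        51264 * y ^ 5 + 1308 * y ^ 6) +
      x ^ 4 * (5225472 + 9057600 * y + 5876384 * y ^ 2 + 1746800 * y ^ 3 + 251968 * y ^ 4 +
        16432 * y ^ 5 + 387 * y ^ 6) +
      x ^ 5 * (3623040 + 5212416 * y + 2720544 * y ^ 2 + 637888 * y ^ 3 + 70592 * y ^ 4 +
        3552 * y ^ 5 + 80 * y ^ 6) +
      x ^ 6 * (1737472 + 2021824 * y + 823104 * y ^ 2 + 144928 * y ^ 3 + 11264 * y ^ 4 + 336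
        * y ^ 5) +
      x ^ 7 * (577664 + 523264 * y + 156992 * y ^ 2 + 18624 * y ^ 3 + 768 * y ^ 4) +
      x ^ 8 * (130816 + 86688 * y + 17136 * y ^ 2 + 1032 * y ^ 3) +
      x ^ 9 * (19264 + 8320 * y + 816 * y ^ 2) +
      x ^ 10 * (1664 + 352 * y) +
      x ^ 11 * (64) := by
    positivity
  have hs : 0 ≤ 16 * y ^ 7 * (y - 13 / 32 * x ^ 2) ^ 2 := by positivity
  refine (add_pos_of_pos_of_nonneg hr (add_nonneg hs h0)).trans_eq ?_
  unfold G
  ring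

lemma G_pos_three {x y : ℝ} (hx : 0 ≤ x) (hy : 0 ≤ y) : 0 < G (4 + x + y) (4 + x) 3 := by
  have h0 : 0 ≤ x * y ^ 7 * (1958 - 82 * x - 14 * x ^ 2 + 343 / 64 * x ^ 3) :=
    mul_nonneg (by positivity) (by nlinarith [mul_nonneg hx (sq_nonneg (x - 4)), sq_nonneg (x - 3)])
  have hr : 0 <
      8579808 + 21380328 * y + 17705419 * y ^ 2 + 5693994 * y ^ 3 + 900653 * y ^ 4 + 140764
        * y ^ 5 + 35597 * y ^ 6 + 6114 * y ^ 7 + 507 * y ^ 8 +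
      x * (42760656 + 90588448 * y + 65333340 * y ^ 2 + 20487518 * y ^ 3 + 3262710 * y ^ 4 +
        308812 * y ^ 5 + 24960 * y ^ 6 + 78 * y ^ 8) +
      x ^ 2 * (90588448 + 161836056 * y + 100937678 * y ^ 2 + 28736946 * y ^ 3 + 4187187 * y
        ^ 4 + 314280 * y ^ 5 + 10108 * y ^ 6) +
      x ^ 3 * (107890704 + 160900320 * y + 85135964 * y ^ 2 + 20945902 * y ^ 3 + 2626488 * y
        ^ 4 + 163344 * y ^ 5 + 3900 * y ^ 6) +
      x ^ 4 * (80450160 + 98967000 * y + 43445831 * y ^ 2 + 8863860 * y ^ 3 + 905458 * y ^ 4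
        + 44684 * y ^ 5 + 915 * y ^ 6) +
      x ^ 5 * (39586800 + 39567456 * y + 14022360 * y ^ 2 + 2265836 * y ^ 3 + 175816 * y ^ 4
        + 6148 * y ^ 5 + 80 * y ^ 6) +
      x ^ 6 * (13189152 + 10476816 * y + 2884100 * y ^ 2 + 345632 * y ^ 3 + 18084 * y ^ 4 +
        336 * y ^ 5) +
      x ^ 7 * (2993376 + 1824704 * y + 366880 * y ^ 2 + 29008 * y ^ 3 + 768 * y ^ 4) +
      x ^ 8 * (456176 + 201096 * y + 26332 * y ^ 2 + 1032 * y ^ 3) +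
      x ^ 9 * (44688 + 12720 * y + 816 * y ^ 2) +
      x ^ 10 * (2544 + 352 * y) +
      x ^ 11 * (64) := by
    positivity
  have hs : 0 ≤ 16 * y ^ 7 * (y - 13 / 32 * x ^ 2) ^ 2 := by positivity
  refine (add_pos_of_pos_of_nonneg hr (add_nonneg hs h0)).trans_eq ?_
  unfold G
  ring

lemma G_pos_two_two {y : ℝ} (hy : 0 ≤ y) : 0 < G (3 + y) 2 2 := by
  have hr : 0 <
      40000 + 202000 * y + 425600 * y ^ 2 + 486080 * y ^ 3 + 328704 * y ^ 4 + 136032 * y ^ 5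
        + 34688 * y ^ 6 + 5312 * y ^ 7 + 448 * y ^ 8 + 16 * y ^ 9 := by
    positivity
  refine hr.trans_eq ?_
  unfold G
  ring

lemma G_pos_three_three {y : ℝ} (hy : 0 ≤ y) : 0 < G (4 + y) 3 3 := by
  have hr : 0 <
      768 + 17024 * y + 134240 * y ^ 2 + 434800 * y ^ 3 + 494096 * y ^ 4 + 239168 * y ^ 5 +
        59344 * y ^ 6 + 8000 * y ^ 7 + 560 * y ^ 8 + 16 * y ^ 9 := by
    positivity
  refine hr.trans_eq ?_
  unfold G
  ring

/-- Positivity on an edge is read off from the Bernstein coefficients of `G` on the interval where `m`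
varies. This edge ends at a permutation of the base point `(1/6, 1/4, 1/3)`, which is
`toCube (4 / 3) 2 (8 / 3)`. -/
lemma G_pos_link_base {m : ℝ} (h₁ : 1 ≤ m) (h₂ : m ≤ 4 / 3) : 0 < G (8 / 3) 2 m := by
  have h : 9 * G (8 / 3) 2 m =
      5098528116 * (4 / 3 - m) ^ 9 +
      44808508404 * (m - 1) * (4 / 3 - m) ^ 8 +
      174546911040 * (m - 1) ^ 2 * (4 / 3 - m) ^ 7 +
      395538130896 * (m - 1) ^ 3 * (4 / 3 - m) ^ 6 +
      574617948544 * (m - 1) ^ 4 * (4 / 3 - m) ^ 5 +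
      554976924416 * (m - 1) ^ 5 * (4 / 3 - m) ^ 4 +
      356348858368 * (m - 1) ^ 6 * (4 / 3 - m) ^ 3 +
      146686488576 * (m - 1) ^ 7 * (4 / 3 - m) ^ 2 +
      35126083584 * (m - 1) ^ 8 * (4 / 3 - m) +
      3728277504 * (m - 1) ^ 9 := by
    unfold G
    ring
  have hb : 0 ≤ 4 / 3 - m := sub_nonneg.2 h₂
  rcases h₁.eq_or_lt with rfl | h₁
  · norm_num [G]
  have ha : 0 < m - 1 := sub_pos.2 h₁
  have hp : 0 < 9 * G (8 / 3) 2 m := by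
    rw [h]
    positivity
  linarith

lemma G_pos_link_32 {m : ℝ} (h₁ : 1 ≤ m) (h₂ : m ≤ 2) : 0 < G 3 2 m := by
  have h : G 3 2 m =
      101632 * (2 - m) ^ 9 +
      892416 * (m - 1) * (2 - m) ^ 8 +
      3416912 * (m - 1) ^ 2 * (2 - m) ^ 7 +
      7475384 * (m - 1) ^ 3 * (2 - m) ^ 6 +
      10282980 * (m - 1) ^ 4 * (2 - m) ^ 5 +
      9213440 * (m - 1) ^ 5 * (2 - m) ^ 4 +
      5377175 * (m - 1) ^ 6 * (2 - m) ^ 3 +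
      1976475 * (m - 1) ^ 7 * (2 - m) ^ 2 +
      419000 * (m - 1) ^ 8 * (2 - m) +
      40000 * (m - 1) ^ 9 := by
    unfold G
    ring
  have hb : 0 ≤ 2 - m := sub_nonneg.2 h₂
  rcases h₁.eq_or_lt with rfl | h₁
  · norm_num [G]
  have ha : 0 < m - 1 := sub_pos.2 h₁
  have hp : 0 < G 3 2 m := by
    rw [h]
    positivity
  linarith

lemma G_pos_link_43 {m : ℝ} (h₁ : 1 ≤ m) (h₂ : m ≤ 3) : 0 < G 4 3 m := by
  have h : 8 * G 4 3 m =
      68553 * (3 - m) ^ 9 +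
      616920 * (m - 1) * (3 - m) ^ 8 +
      2356717 * (m - 1) ^ 2 * (3 - m) ^ 7 +
      4949992 * (m - 1) ^ 3 * (3 - m) ^ 6 +
      6169202 * (m - 1) ^ 4 * (3 - m) ^ 5 +
      4560641 * (m - 1) ^ 5 * (3 - m) ^ 4 +
      1853036 * (m - 1) ^ 6 * (3 - m) ^ 3 +
      320867 * (m - 1) ^ 7 * (3 - m) ^ 2 +
      796 * (m - 1) ^ 8 * (3 - m) +
      12 * (m - 1) ^ 9 := by
    unfold G
    ring
  have hb : 0 ≤ 3 - m := sub_nonneg.2 h₂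
  rcases h₁.eq_or_lt with rfl | h₁
  · norm_num [G]
  have ha : 0 < m - 1 := sub_pos.2 h₁
  have hp : 0 < 8 * G 4 3 m := by
    rw [h]
    positivity
  linarith

lemma G_pos_link_54 {m : ℝ} (h₁ : 1 ≤ m) (h₂ : m ≤ 3) : 0 < G 5 4 m := by
  have h : 8 * G 5 4 m =
      1569740 * (3 - m) ^ 9 +
      14955836 * (m - 1) * (3 - m) ^ 8 +
      62067395 * (m - 1) ^ 2 * (3 - m) ^ 7 +
      146819886 * (m - 1) ^ 3 * (3 - m) ^ 6 +
      217345577 * (m - 1) ^ 4 * (3 - m) ^ 5 +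
      207820112 * (m - 1) ^ 5 * (3 - m) ^ 4 +
      127550640 * (m - 1) ^ 6 * (3 - m) ^ 3 +
      48046211 * (m - 1) ^ 7 * (3 - m) ^ 2 +
      9959240 * (m - 1) ^ 8 * (3 - m) +
      850675 * (m - 1) ^ 9 := by
    unfold G
    ring
  have hb : 0 ≤ 3 - m := sub_nonneg.2 h₂
  rcases h₁.eq_or_lt with rfl | h₁
  · norm_num [G]
  have ha : 0 < m - 1 := sub_pos.2 h₁
  have hp : 0 < 8 * G 5 4 m := by
    rw [h]
    positivity
  linarith

/-! ### Paths in the complement of `Ω` -/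

lemma toCube_mem {p : ℝ × ℝ × ℝ} (hp : p ∈ goodSet) :
    toCube p.1 p.2.1 p.2.2 ∈ cube \ OmegaSet := by
  obtain ⟨k, l, m⟩ := p
  obtain ⟨hk, hl, hm, h₁, h₂, h₃, hG⟩ := hp
  simp only at hk hl hm h₁ h₂ h₃ hG
  have hd : 0 < k + l + m - 2 := by linarith
  refine ⟨⟨⟨by simp only [toCube]; positivity, ?_⟩, ⟨by simp only [toCube]; positivity, ?_⟩,
    ⟨by simp only [toCube]; positivity, ?_⟩⟩, fun h => ?_⟩
  · rw [toCube, div_lt_div_iff₀ (by positivity) (by norm_num)]; linarith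
  · rw [toCube, div_lt_div_iff₀ (by positivity) (by norm_num)]; linarith
  · rw [toCube, div_lt_div_iff₀ (by positivity) (by norm_num)]; linarith
  · have h0 : Qpoly (toCube k l m).1 (toCube k l m).2.1 (toCube k l m).2.2 = 0 := h
    rw [← Qpoly_mul_pow hd.ne', h0, zero_mul] at hG
    exact hG.false

/-- The images of two real triples can be joined by a path that avoids `Ω` inside the cube. -/
def Linked (k l m k' l' m' : ℝ) : Prop :=
  JoinedIn (cube \ OmegaSet) (toCube k l m) (toCube k' l' m')

lemma linked_of_convex {C : Set (ℝ × ℝ × ℝ)} (hC : Convex ℝ C) (hg : C ⊆ goodSet)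
    {k l m k' l' m' : ℝ} (h : (k, l, m) ∈ C) (h' : (k', l', m') ∈ C) :
    Linked k l m k' l' m' := by
  have hcont : ContinuousOn (fun p : ℝ × ℝ × ℝ => toCube p.1 p.2.1 p.2.2) C := by
    have hd : ∀ p ∈ C, 2 * (p.1 + p.2.1 + p.2.2 - 2) ≠ 0 := fun p hp => by
      obtain ⟨hk, hl, hm, h₁, h₂, h₃, -⟩ := hg hp
      linarith
    unfold toCube
    fun_prop (disch := exact hd)
  exact (((hC.isPathConnected ⟨_, h⟩).joinedIn _ h _ h').map_continuousOn hcont).mono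
    (Set.image_subset_iff.2 fun p hp => toCube_mem (hg hp))

lemma Linked.swap_left {k l m k' l' m' : ℝ} (h : Linked k l m k' l' m') :
    Linked l k m l' k' m' := by
  have hf : Continuous fun p : ℝ × ℝ × ℝ => (p.2.1, p.1, p.2.2) := by fun_prop
  have e (a b c : ℝ) : toCube b a c =
      (fun p : ℝ × ℝ × ℝ => (p.2.1, p.1, p.2.2)) (toCube a b c) := by
    simp only [toCube, add_comm b a]
  rw [Linked, e k l m, e k' l' m']
  refine (h.map hf).mono (Set.image_subset_iff.2 fun p hp => ?_)
  obtain ⟨⟨h₁, h₂, h₃⟩, hQ⟩ := hp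
  refine ⟨⟨h₂, h₁, h₃⟩, fun h0 => hQ ?_⟩
  simp only [OmegaSet, Set.mem_ofPred_eq, Qpoly] at h0 ⊢
  rw [← h0]
  ring

lemma Linked.swap_right {k l m k' l' m' : ℝ} (h : Linked k l m k' l' m') :
    Linked k m l k' m' l' := by
  have hf : Continuous fun p : ℝ × ℝ × ℝ => (p.1, p.2.2, p.2.1) := by fun_prop
  have e (a b c : ℝ) : toCube a c b =
      (fun p : ℝ × ℝ × ℝ => (p.1, p.2.2, p.2.1)) (toCube a b c) := by
    simp only [toCube, add_right_comm a c b]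
  rw [Linked, e k l m, e k' l' m']
  refine (h.map hf).mono (Set.image_subset_iff.2 fun p hp => ?_)
  obtain ⟨⟨h₁, h₂, h₃⟩, hQ⟩ := hp
  refine ⟨⟨h₁, h₃, h₂⟩, fun h0 => hQ ?_⟩
  simp only [OmegaSet, Set.mem_ofPred_eq, Qpoly] at h0 ⊢
  rw [← h0]
  ring

lemma Linked.symm {k l m k' l' m' : ℝ} (h : Linked k l m k' l' m') : Linked k' l' m' k l m :=
  JoinedIn.symm h

lemma Linked.trans {k l m k' l' m' k'' l'' m'' : ℝ} (h : Linked k l m k' l' m')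
    (h' : Linked k' l' m' k'' l'' m'') : Linked k l m k'' l'' m'' :=
  JoinedIn.trans h h'

/-- Any two points of the wedge with vertex `(c, c, m)` are linked; the condition `2 < c + m`
keeps the wedge inside the cube. -/
lemma linked_wedge {c m : ℝ} (hc : 1 < c) (hm : 0 < m) (hcm : 2 < c + m)
    (hG : ∀ {x y : ℝ}, 0 ≤ x → 0 ≤ y → 0 < G (c + x + y) (c + x) m) {k l k' l' : ℝ}
    (hl : c ≤ l) (hk : l ≤ k) (hl' : c ≤ l') (hk' : l' ≤ k') : Linked k l m k' l' m := by
  refine linked_of_convex (C := {p : ℝ × ℝ × ℝ | c ≤ p.2.1 ∧ p.2.1 ≤ p.1 ∧ p.2.2 = m}) ?_ ?_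
    ⟨hl, hk, rfl⟩ ⟨hl', hk', rfl⟩
  · rintro ⟨k₁, l₁, m₁⟩ ⟨h₁, h₂, h₃⟩ ⟨k₂, l₂, m₂⟩ ⟨h₄, h₅, h₆⟩ a b ha hb hab
    simp only [Set.mem_ofPred_eq, Prod.smul_mk, Prod.mk_add_mk, smul_eq_mul] at *
    refine ⟨?_, by gcongr, by rw [h₃, h₆, ← add_mul, hab, one_mul]⟩
    calc c = a * c + b * c := by rw [← add_mul, hab, one_mul]
      _ ≤ a * l₁ + b * l₂ := by gcongr
  · rintro ⟨k₁, l₁, m₁⟩ ⟨h₁, h₂, h₃⟩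
    simp only at h₁ h₂ h₃
    subst h₃
    refine ⟨?_, ?_, hm, ?_, ?_, ?_, ?_⟩ <;> simp only
    iterate 5 linarith
    simpa using hG (sub_nonneg.2 h₁) (sub_nonneg.2 h₂)

/-- Any two points of the half-line with end point `(c, n, n)` are linked. -/
lemma linked_halfline {c n : ℝ} (hn : 1 < n) (hc : n ≤ c)
    (hG : ∀ {y : ℝ}, 0 ≤ y → 0 < G (c + y) n n) {k k' : ℝ} (hk : c ≤ k) (hk' : c ≤ k') :
    Linked k n n k' n n := by
  refine linked_of_convex (C := Set.Ici c ×ˢ {n} ×ˢ {n})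
    ((convex_Ici c).prod ((convex_singleton n).prod (convex_singleton n))) ?_
    ⟨hk, rfl, rfl⟩ ⟨hk', rfl, rfl⟩
  rintro ⟨k₁, l₁, m₁⟩ ⟨h₁, h₂, h₃⟩
  simp only [Set.mem_Ici, Set.mem_singleton_iff] at h₁ h₂ h₃
  subst h₂ h₃
  refine ⟨?_, ?_, ?_, ?_, ?_, ?_, ?_⟩ <;> simp only
  iterate 6 linarith
  simpa using hG (sub_nonneg.2 h₁)

lemma linked_edge {k l b : ℝ} (hl : 2 ≤ l) (hk : l ≤ k)
    (hG : ∀ {m : ℝ}, 1 ≤ m → m ≤ b → 0 < G k l m) {m m' : ℝ}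
    (h₁ : 1 ≤ m) (h₂ : m ≤ b) (h₁' : 1 ≤ m') (h₂' : m' ≤ b) :
    Linked k l m k l m' := by
  refine linked_of_convex (C := {k} ×ˢ {l} ×ˢ Set.Icc 1 b)
    ((convex_singleton k).prod ((convex_singleton l).prod (convex_Icc 1 b))) ?_
    ⟨rfl, rfl, h₁, h₂⟩ ⟨rfl, rfl, h₁', h₂'⟩
  rintro ⟨k₁, l₁, m₁⟩ ⟨h₁, h₂, h₃, h₄⟩
  simp only [Set.mem_singleton_iff] at h₁ h₂ h₃ h₄
  subst h₁ h₂
  refine ⟨?_, ?_, ?_, ?_, ?_, ?_, ?_⟩ <;> simp only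
  iterate 6 linarith
  exact hG h₃ h₄

lemma linked_one {k l k' l' : ℝ} (hl : 2 ≤ l) (hk : l ≤ k) (hl' : 2 ≤ l') (hk' : l' ≤ k') :
    Linked k l 1 k' l' 1 :=
  linked_wedge (by norm_num) (by norm_num) (by norm_num) G_pos_one hl hk hl' hk'

/-- The base triple `(4/3, 2, 8/3)` is linked to `(3, 2, 1)`. -/
lemma joined_base : Linked (4 / 3) 2 (8 / 3) 3 2 1 := by
  have h₁ : Linked 2 3 1 3 2 1 :=
    (linked_one (k := 3) (l := 2) (k' := 2) (l' := 2) le_rfl (by norm_num) le_rfl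
      le_rfl).swap_left.trans
      (linked_one le_rfl le_rfl le_rfl (by norm_num))
  have h₂ : Linked 3 1 2 3 2 1 := by
    have h : Linked 3 2 1 3 2 2 :=
      linked_edge le_rfl (by norm_num) G_pos_link_32 le_rfl (by norm_num) (by norm_num) le_rfl
    exact h.swap_right.trans h.symm
  have h₃ : Linked (8 / 3) 2 (4 / 3) 3 2 1 :=
    (linked_edge le_rfl (by norm_num) G_pos_link_base (by norm_num) le_rfl le_rfl
      (by norm_num)).trans (linked_one le_rfl (by norm_num) le_rfl (by norm_num))
  -- The reversal of coordinates is a product of three adjacent transpositions.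
  exact h₃.swap_left.swap_right.swap_left.trans
    (h₁.swap_right.swap_left.trans (h₂.swap_left.trans h₁))

/-! ### The integer triples -/

theorem stmt14 (k l m : ℕ) (hkl : l ≤ k) (hlm : m ≤ l) (hm : 1 ≤ m) (hl : 2 ≤ l)
    (hcase : m = 1 ∨ (m = 2 ∧ 5 ≤ k + l) ∨ (m = 3 ∧ 7 ≤ k + l)) :
    aPoint k l m ∈ O₃ := by
  have hkl' : (l : ℝ) ≤ k := by exact_mod_cast hkl
  have hl' : (2 : ℝ) ≤ l := by exact_mod_cast hl
  have key : Linked k l m 3 2 1 := by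
    have hone {k l : ℝ} (hl : 2 ≤ l) (hk : l ≤ k) : Linked k l 1 3 2 1 :=
      linked_one hl hk le_rfl (by norm_num)
    have edge43 {m : ℝ} (h₁ : 1 ≤ m) (h₂ : m ≤ 3) : Linked 4 3 m 3 2 1 :=
      (linked_edge (by norm_num) (by norm_num) G_pos_link_43 h₁ h₂ le_rfl (by norm_num)).trans
        (hone (by norm_num) (by norm_num))
    rcases hcase with rfl | ⟨rfl, h5⟩ | ⟨rfl, h7⟩
    · exact_mod_cast hone hl' hkl'
    · rcases hl.eq_or_lt with rfl | hl3
      · have hk3 : (3 : ℝ) ≤ k := by exact_mod_cast (by omega : 3 ≤ k)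
        have h : Linked k 2 2 3 2 1 :=
          (linked_halfline (by norm_num) (by norm_num) G_pos_two_two hk3 le_rfl).trans
            (linked_edge le_rfl (by norm_num) G_pos_link_32 (by norm_num) le_rfl le_rfl
              (by norm_num))
        exact_mod_cast h
      · have hl3' : (3 : ℝ) ≤ l := by exact_mod_cast hl3
        have h : Linked k l 2 3 2 1 :=
          (linked_wedge (by norm_num) (by norm_num) (by norm_num) G_pos_two hl3' hkl' le_rfl
            (by norm_num)).trans (edge43 (by norm_num) (by norm_num))
        exact_mod_cast h
    · rcases hlm.eq_or_lt with rfl | hl4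
      · have hk4 : (4 : ℝ) ≤ k := by exact_mod_cast (by omega : 4 ≤ k)
        have h : Linked k 3 3 3 2 1 :=
          (linked_halfline (by norm_num) (by norm_num) G_pos_three_three hk4 le_rfl).trans
            (edge43 (by norm_num) le_rfl)
        exact_mod_cast h
      · have hl4' : (4 : ℝ) ≤ l := by exact_mod_cast hl4
        have h : Linked k l 3 3 2 1 :=
          (linked_wedge (by norm_num) (by norm_num) (by norm_num) G_pos_three hl4' hkl' le_rfl
            (by norm_num)).trans
          ((linked_edge (b := 3) (by norm_num) (by norm_num) G_pos_link_54 (by norm_num) le_rfl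
            le_rfl (by norm_num)).trans (hone (l := 4) (k := 5) (by norm_num) (by norm_num)))
        exact_mod_cast h
  have hbase : toCube (4 / 3) 2 (8 / 3) = (1 / 6, 1 / 4, 1 / 3) := by norm_num [toCube]
  have h : JoinedIn (cube \ OmegaSet) (1 / 6, 1 / 4, 1 / 3) (aPoint k l m) := by
    rw [← hbase]
    exact joined_base.trans key.symm
  obtain ⟨γ, hγ⟩ := h
  exact (isPreconnected_range γ.continuous).subset_connectedComponentIn ⟨0, γ.source⟩
    (Set.range_subset_iff.2 hγ) ⟨1, γ.target⟩
end
end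

section
/- For all real numbers h and x, Q(x, x, h−2x) = 0 if and only if (4x−1−2h)·(16x²−(24h−4)x+8h²−4h+1)·(16x³−16hx²+2h−1) = 0. (In other words, on the plane a₁+a₂+a₃ = h and the diagonal a₁ = a₂ = x, the equation Q(a₁,a₂,a₃) = 0 reduces to the factorized equation (4x−1−2h)(16x²−(24h−4)x+8h²−4h+1)(16x³−16hx²+2h−1)³ = 0.) -/
noncomputable section

/-- Factorization of `Q` along the diagonal `a₁ = a₂ = x` of the plane `a₁ + a₂ + a₃ = h`. The cubic
factor occurs with multiplicity three, which does not affect the zero set. -/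
lemma Qpoly_diag (h x : ℝ) :
    Qpoly x x (h - 2 * x) =
      -((4 * x - 1 - 2 * h) * (16 * x ^ 2 - (24 * h - 4) * x + 8 * h ^ 2 - 4 * h + 1) *
        (16 * x ^ 3 - 16 * h * x ^ 2 + 2 * h - 1) ^ 3) := by
  simp only [Qpoly]
  ring

theorem stmt16 (h x : ℝ) :
    Qpoly x x (h - 2 * x) = 0 ↔
    (4 * x - 1 - 2 * h) * (16 * x ^ 2 - (24 * h - 4) * x + 8 * h ^ 2 - 4 * h + 1) *
      (16 * x ^ 3 - 16 * h * x ^ 2 + 2 * h - 1) = 0 := by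
  rw [Qpoly_diag, neg_eq_zero]
  simp only [mul_eq_zero, pow_eq_zero_iff (three_ne_zero)]
end
end

section
/- Let t ≥ 2 be an integer and consider the parameters a₁ = a₂ = (t²+1)/(4t(t+1)), a₃ = 1/(2(t+1)) (those of the generalized Wallach space SO(2(t²+t+1))/SO(t²+1)×SO(t²+1)×SO(2t)). Then each of the three triples u₁ = (t+1, t+1, 2t), u₂ = (2t² + (t²−1)√(t/(t+2)), 2t² − (t²−1)√(t/(t+2)), 2t(t²+1)/(t+1)), and u₃ = (2t² − (t²−1)√(t/(t+2)), 2t² + (t²−1)√(t/(t+2)), 2t(t²+1)/(t+1)) is an Einstein solution; no two of u₁, u₂, u₃ are positive scalar multiples of each other; and every Einstein solution for these parameters is a positive scalar multiple of one of u₁, u₂, u₃. Hence this space has exactly three invariant Einstein metrics up to homothety. -/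
/-!
With `a₁ = a₂ = a` and `a₃ = b`, the difference of the two Einstein equations factors as
`(a + 2b) (y - x) (2a (x + y) - z) = 0`, so there are two branches (`isEinstein_symm_iff`).

* If `x = y`, what remains is the quadratic `(a + b) z² - x z + (1 - 2b) x² = 0`. For the given
  parameters `(a + b) (1 - 2b) = 1/4`, so its discriminant vanishes and it contributes the single
  solution `u₁` up to scaling.
* If `z = 2a (x + y)`, the sum of the equations becomes a homogeneous quadratic relation between
  `x` and `y`, which for the given parameters reads
  `(t + 2) (2t² (x - y))² = t ((t² - 1) (x + y))²`. Its two square roots give `u₂` and `u₃`.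

Both branches are equivalences (`isEinstein_param_iff`), hence they serve to verify the three
solutions as well as to show that there are no others.
-/

noncomputable section

/-- The pair of Einstein equations together with positivity of the metric components. -/
def isEinstein (a₁ a₂ a₃ x₁ x₂ x₃ : ℝ) : Prop :=
  0 < x₁ ∧ 0 < x₂ ∧ 0 < x₃ ∧
  (a₂ + a₃) * (a₁ * x₂ ^ 2 + a₁ * x₃ ^ 2 - x₂ * x₃) + (a₂ * x₂ + a₃ * x₃) * x₁
    - (a₁ * a₂ + a₁ * a₃ + 2 * a₂ * a₃) * x₁ ^ 2 = 0 ∧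
  (a₁ + a₃) * (a₂ * x₁ ^ 2 + a₂ * x₃ ^ 2 - x₁ * x₃) + (a₁ * x₁ + a₃ * x₃) * x₂
    - (a₁ * a₂ + 2 * a₁ * a₃ + a₂ * a₃) * x₂ ^ 2 = 0

/-- Einstein solutions normalized by `x₁ + x₂ + x₃ = 1`. -/
def normalizedEinstein (a₁ a₂ a₃ : ℝ) : Set (ℝ × ℝ × ℝ) :=
  {x | isEinstein a₁ a₂ a₃ x.1 x.2.1 x.2.2 ∧ x.1 + x.2.1 + x.2.2 = 1}

/-- For `a₁ = a₂ = a`, the Einstein equations split into the branch `x = y` and the branch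
`z = 2a (x + y)`, each carrying one further quadratic equation. -/
lemma isEinstein_symm_iff {a b x y z : ℝ} (ha : 0 < a) (hb : 0 < b) :
    isEinstein a a b x y z ↔ 0 < x ∧ 0 < y ∧ 0 < z ∧
      ((x = y ∧ (a + b) * z ^ 2 - x * z + (1 - 2 * b) * x ^ 2 = 0) ∨
       (z = 2 * a * (x + y) ∧
        (1 + 2 * b) * (x * y) = (a + b) * (1 - 4 * a ^ 2) * (x + y) ^ 2)) := by
  unfold isEinstein
  refine and_congr_right fun _ => and_congr_right fun _ => and_congr_right fun _ => ?_
  constructor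
  · rintro ⟨h1, h2⟩
    have hdiff : (a + 2 * b) * ((y - x) * (2 * a * (x + y) - z)) = 0 := by
      linear_combination h1 - h2
    have hab : a + 2 * b ≠ 0 := by positivity
    rcases mul_eq_zero.1 ((mul_eq_zero.1 hdiff).resolve_left hab) with h | h
    · obtain rfl : y = x := sub_eq_zero.1 h
      refine Or.inl ⟨rfl, mul_left_cancel₀ ha.ne' ?_⟩
      linear_combination h1
    · obtain rfl : z = 2 * a * (x + y) := (sub_eq_zero.1 h).symm
      refine Or.inr ⟨rfl, mul_left_cancel₀ ha.ne' ?_⟩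
      linear_combination (h1 + h2) / 2
  · rintro (⟨rfl, h⟩ | ⟨rfl, h⟩)
    · constructor <;> linear_combination a * h
    · constructor <;> linear_combination a * h

/-- For the parameters of the family, the quadratic of the branch `x = y` is a perfect square and
that of the other branch, written in terms of `x - y` and `x + y`, is a difference of squares
once `t / (t + 2)` has a square root. -/
lemma isEinstein_param_iff {T x y z : ℝ} (hT : 2 ≤ T) :
    isEinstein ((T ^ 2 + 1) / (4 * T * (T + 1))) ((T ^ 2 + 1) / (4 * T * (T + 1)))
        (1 / (2 * (T + 1))) x y z ↔ 0 < x ∧ 0 < y ∧ 0 < z ∧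
      ((x = y ∧ (T + 1) * z = 2 * T * x) ∨
       (2 * T * (T + 1) * z = (T ^ 2 + 1) * (x + y) ∧
        (T + 2) * (2 * T ^ 2 * (x - y)) ^ 2 = T * ((T ^ 2 - 1) * (x + y)) ^ 2)) := by
  have hT0 : 0 < T := by linarith
  have hT1 : 0 < T + 1 := by linarith
  rw [isEinstein_symm_iff (by positivity) (by positivity)]
  refine and_congr_right fun _ => and_congr_right fun _ => and_congr_right fun _ =>
    or_congr (and_congr_right fun _ => ?_) (and_congr ?_ ?_)
  · have key : ((T ^ 2 + 1) / (4 * T * (T + 1)) + 1 / (2 * (T + 1))) * z ^ 2 - x * z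
        + (1 - 2 * (1 / (2 * (T + 1)))) * x ^ 2
        = ((T + 1) * z - 2 * T * x) ^ 2 / (4 * T * (T + 1)) := by
      field_simp
      ring
    rw [key, div_eq_zero_iff, or_iff_left (by positivity), sq_eq_zero_iff, sub_eq_zero]
  · have key : 2 * ((T ^ 2 + 1) / (4 * T * (T + 1))) * (x + y)
        = (T ^ 2 + 1) * (x + y) / (2 * T * (T + 1)) := by
      field_simp
      ring
    rw [key, eq_div_iff (by positivity), mul_comm z]
  · have key : (1 + 2 * (1 / (2 * (T + 1)))) * (x * y)
        - ((T ^ 2 + 1) / (4 * T * (T + 1)) + 1 / (2 * (T + 1)))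
          * (1 - 4 * ((T ^ 2 + 1) / (4 * T * (T + 1))) ^ 2) * (x + y) ^ 2
        = (T * ((T ^ 2 - 1) * (x + y)) ^ 2 - (T + 2) * (2 * T ^ 2 * (x - y)) ^ 2)
          / (16 * T ^ 4 * (T + 1)) := by
      field_simp
      ring
    rw [← sub_eq_zero, key, div_eq_zero_iff, or_iff_left (by positivity), sub_eq_zero, eq_comm]

theorem stmt19 (t : ℕ) (ht : 2 ≤ t)
    (a₁ a₂ a₃ : ℝ)
    (ha₁ : a₁ = ((t : ℝ) ^ 2 + 1) / (4 * t * (t + 1)))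
    (ha₂ : a₂ = ((t : ℝ) ^ 2 + 1) / (4 * t * (t + 1)))
    (ha₃ : a₃ = 1 / (2 * ((t : ℝ) + 1)))
    (u₁ u₂ u₃ : ℝ × ℝ × ℝ)
    (hu₁ : u₁ = ((t : ℝ) + 1, (t : ℝ) + 1, 2 * (t : ℝ)))
    (hu₂ : u₂ = (2 * (t : ℝ) ^ 2 + ((t : ℝ) ^ 2 - 1) * Real.sqrt ((t : ℝ) / (t + 2)),
      2 * (t : ℝ) ^ 2 - ((t : ℝ) ^ 2 - 1) * Real.sqrt ((t : ℝ) / (t + 2)),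
      2 * (t : ℝ) * ((t : ℝ) ^ 2 + 1) / ((t : ℝ) + 1)))
    (hu₃ : u₃ = (2 * (t : ℝ) ^ 2 - ((t : ℝ) ^ 2 - 1) * Real.sqrt ((t : ℝ) / (t + 2)),
      2 * (t : ℝ) ^ 2 + ((t : ℝ) ^ 2 - 1) * Real.sqrt ((t : ℝ) / (t + 2)),
      2 * (t : ℝ) * ((t : ℝ) ^ 2 + 1) / ((t : ℝ) + 1))) :
    isEinstein a₁ a₂ a₃ u₁.1 u₁.2.1 u₁.2.2 ∧
    isEinstein a₁ a₂ a₃ u₂.1 u₂.2.1 u₂.2.2 ∧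
    isEinstein a₁ a₂ a₃ u₃.1 u₃.2.1 u₃.2.2 ∧
    (¬ ∃ c : ℝ, 0 < c ∧ u₂ = c • u₁) ∧
    (¬ ∃ c : ℝ, 0 < c ∧ u₃ = c • u₁) ∧
    (¬ ∃ c : ℝ, 0 < c ∧ u₃ = c • u₂) ∧
    ∀ x : ℝ × ℝ × ℝ, isEinstein a₁ a₂ a₃ x.1 x.2.1 x.2.2 →
      ∃ c : ℝ, 0 < c ∧ (x = c • u₁ ∨ x = c • u₂ ∨ x = c • u₃) := by
  have hT : (2 : ℝ) ≤ t := by exact_mod_cast ht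
  generalize (t : ℝ) = T at *
  have hT0 : 0 < T := by linarith
  have hT1 : 0 < T + 1 := by linarith
  have hT2 : 0 < T + 2 := by linarith
  have hTs : 0 < T ^ 2 - 1 := by nlinarith
  have hr0 : 0 < √(T / (T + 2)) := Real.sqrt_pos.2 (by positivity)
  have hr2 : (T + 2) * √(T / (T + 2)) ^ 2 = T := by
    rw [Real.sq_sqrt (by positivity)]
    field_simp
  generalize √(T / (T + 2)) = r at *
  have hr1 : r < 1 := by
    by_contra! h
    have h1 : 1 ≤ r ^ 2 := one_le_pow₀ h
    nlinarith
  have hpos : 0 < 2 * T ^ 2 - (T ^ 2 - 1) * r := by nlinarith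
  have hpos' : 0 < 2 * T ^ 2 + (T ^ 2 - 1) * r := by positivity
  have hd : 0 < (T ^ 2 - 1) * r := by positivity
  have hz : 0 < 2 * T * (T ^ 2 + 1) / (T + 1) := by positivity
  subst ha₁ ha₂ ha₃ hu₁ hu₂ hu₃
  simp only [isEinstein_param_iff hT, Prod.smul_mk, smul_eq_mul, Prod.mk.injEq, Prod.forall]
  refine ⟨⟨hT1, hT1, by positivity, Or.inl ⟨trivial, by ring⟩⟩,
    ⟨hpos', hpos, hz, Or.inr ⟨?_, ?_⟩⟩, ⟨hpos, hpos', hz, Or.inr ⟨?_, ?_⟩⟩, ?_, ?_, ?_, ?_⟩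
  · field_simp
    ring
  · linear_combination 16 * T ^ 4 * (T ^ 2 - 1) ^ 2 * hr2
  · field_simp
    ring
  · linear_combination 16 * T ^ 4 * (T ^ 2 - 1) ^ 2 * hr2
  · rintro ⟨c, -, h1, h2, -⟩
    linarith
  · rintro ⟨c, -, h1, h2, -⟩
    linarith
  · rintro ⟨c, -, h1, -, h3⟩
    -- The third components agree and are nonzero, so the scaling factor is `1`.
    obtain rfl : c = 1 := mul_right_cancel₀ hz.ne' (by linarith)
    linarith
  · rintro x y z ⟨hx, hy, -, ⟨rfl, h⟩ | ⟨h1, h2⟩⟩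
    · refine ⟨x / (T + 1), by positivity, Or.inl ⟨?_, ?_, ?_⟩⟩
      · field_simp
      · field_simp
      · field_simp
        linear_combination h
    · have hz' : z = (x + y) / (4 * T ^ 2) * (2 * T * (T ^ 2 + 1) / (T + 1)) := by
        field_simp
        linear_combination 2 * h1
      have hsq : (2 * T ^ 2 * (x - y)) ^ 2 = ((T ^ 2 - 1) * r * (x + y)) ^ 2 := by
        refine mul_left_cancel₀ hT2.ne' ?_
        linear_combination h2 - ((T ^ 2 - 1) * (x + y)) ^ 2 * hr2
      -- The sum of the first two components of `u₂` and of `u₃` is `4t²`.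
      refine ⟨(x + y) / (4 * T ^ 2), by positivity, Or.inr ?_⟩
      rcases sq_eq_sq_iff_eq_or_eq_neg.1 hsq with h | h
      · refine Or.inl ⟨?_, ?_, hz'⟩
        · field_simp
          linear_combination h
        · field_simp
          linear_combination -h
      · refine Or.inr ⟨?_, ?_, hz'⟩
        · field_simp
          linear_combination h
        · field_simp
          linear_combination -h
end
end
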